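/- arXiv:1506.06523 — 9 statements merged into one kernel-verified Lean document; each statement's English description precedes it below -/
import Mathlib

section
/- Let A be a unital complex C*-algebra, let a, b be positive invertible elements of A and let g ∈ A be invertible. Then for every real t, g·γ_{a,b}(t)·g* = γ_{g a g*, g b g*}(t), i.e. g a^{1/2}(a^{-1/2} b a^{-1/2})^t a^{1/2} g* = (g a g*)^{1/2} ((g a g*)^{-1/2} (g b g*) (g a g*)^{-1/2})^t (g a g*)^{1/2}. In other words, the action g·a = g a g* maps geodesics to geodesics. -/
/-- An element of a unital C*-algebra is *positive invertible* if it is self-adjoint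
with spectrum contained in `(0, ∞)`. -/
def IsPosInv {A : Type*} [CStarAlgebra A] (a : A) : Prop :=
  IsSelfAdjoint a ∧ spectrum ℝ a ⊆ Set.Ioi (0 : ℝ)

/-- Real powers `a ^ t` defined by the continuous functional calculus. -/
noncomputable def cpow {A : Type*} [CStarAlgebra A] (a : A) (t : ℝ) : A :=
  cfc (fun x : ℝ => x ^ t) a

/-- The logarithm defined by the continuous functional calculus. -/
noncomputable def clog {A : Type*} [CStarAlgebra A] (a : A) : A :=
  cfc Real.log a

/-- The metric `d(x, y) = ‖log (x^{-1/2} y x^{-1/2})‖` on positive invertible elements. -/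
noncomputable def dd {A : Type*} [CStarAlgebra A] (x y : A) : ℝ :=
  ‖clog (cpow x (-(1/2)) * y * cpow x (-(1/2)))‖

/-- The geodesic `γ_{a,b}(t) = a^{1/2} (a^{-1/2} b a^{-1/2})^t a^{1/2}`. -/
noncomputable def geo {A : Type*} [CStarAlgebra A] (a b : A) (t : ℝ) : A :=
  cpow a (1/2) * cpow (cpow a (-(1/2)) * b * cpow a (-(1/2))) t * cpow a (1/2)

/-- The distance from a point to a subset. -/
noncomputable def distSet {A : Type*} [CStarAlgebra A] (x : A) (C : Set A) : ℝ :=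
  sInf {r : ℝ | ∃ c ∈ C, r = dd x c}

/-- The distance between two subsets. -/
noncomputable def distSets {A : Type*} [CStarAlgebra A] (C D : Set A) : ℝ :=
  sInf {r : ℝ | ∃ x ∈ C, ∃ y ∈ D, r = dd x y}

/-- The orbit `O_H(1) = {h h* : h ∈ H}` of the identity under the action `h · a = h a h*`. -/
def orbitOne {A : Type*} [CStarAlgebra A] (H : Subgroup Aˣ) : Set A :=
  {x : A | ∃ h ∈ H, x = (h : A) * star (h : A)}

/-- The fixed point set `P^H = {a positive invertible : h a h* = a for all h ∈ H}`. -/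
def fixedSet {A : Type*} [CStarAlgebra A] (H : Subgroup Aˣ) : Set A :=
  {a : A | IsPosInv a ∧ ∀ h ∈ H, (h : A) * a * star (h : A) = a}

/-- The similarity number `Sim(H) = inf {‖s‖ ‖s⁻¹‖ : s a unitarizer of H}`. -/
noncomputable def simNum {A : Type*} [CStarAlgebra A] (H : Subgroup Aˣ) : ℝ :=
  sInf {c : ℝ | ∃ s : Aˣ, (∀ h ∈ H, (↑s⁻¹ : A) * (h : A) * (s : A) ∈ unitary A) ∧
    c = ‖(s : A)‖ * ‖(↑s⁻¹ : A)‖}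

/-- The set of norms of elements of `H`; its supremum is the size `|H|`. -/
def normSet {A : Type*} [CStarAlgebra A] (H : Subgroup Aˣ) : Set ℝ :=
  {r : ℝ | ∃ h ∈ H, r = ‖(h : A)‖}

/-- The orbit diameter function `D_H(a) = sup_{h ∈ H} d(a, h a h*)`. -/
noncomputable def orbDiam {A : Type*} [CStarAlgebra A] (H : Subgroup Aˣ) (a : A) : ℝ :=
  sSup {r : ℝ | ∃ h ∈ H, r = dd a ((h : A) * a * star (h : A))}

/-- The size `|p H q| = sup_{h ∈ H} ‖p h q‖` of the conjugated family `p H q`. -/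
noncomputable def sizeConj {A : Type*} [CStarAlgebra A] (H : Subgroup Aˣ) (p q : A) : ℝ :=
  sSup {c : ℝ | ∃ h ∈ H, c = ‖p * (h : A) * q‖}

/-- The similarity number `Sim(p H q)` of the conjugated family `p H q`. -/
noncomputable def simConj {A : Type*} [CStarAlgebra A] (H : Subgroup Aˣ) (p q : A) : ℝ :=
  sInf {c : ℝ | ∃ u : Aˣ, (∀ h ∈ H, (↑u⁻¹ : A) * (p * (h : A) * q) * (u : A) ∈ unitary A) ∧
    c = ‖(u : A)‖ * ‖(↑u⁻¹ : A)‖}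

/-- The geodesic `γ_{r², s²}(t) = r (r⁻¹ s² r⁻¹)^t r` for positive invertible `r`, `s`. -/
noncomputable def gammaRS {A : Type*} [CStarAlgebra A] (r s : Aˣ) (t : ℝ) : A :=
  (r : A) * cpow ((↑r⁻¹ : A) * ((s : A) * (s : A)) * (↑r⁻¹ : A)) t * (r : A)

attribute [local instance] CStarAlgebra.spectralOrder CStarAlgebra.spectralOrderedRing

lemma isPosInv_iff_aux {A : Type*} [CStarAlgebra A] (a : A) :
    IsPosInv a ↔ IsStrictlyPositive a := by
  rw [CStarAlgebra.isStrictlyPositive_iff_isSelfAdjoint_and_spectrum_pos]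
  rfl

/-- The basic facts on square roots of a strictly positive element. -/
lemma sqrt_facts_aux {A : Type*} [CStarAlgebra A] (a : A) (ha : IsStrictlyPositive a) :
    ∃ r s : A, cpow a (1/2) = r ∧ cpow a (-(1/2)) = s ∧ star r = r ∧ star s = s ∧
      r * s = 1 ∧ s * r = 1 ∧ r * r = a := by
  have h1 : ∀ y : ℝ, cpow a y = a ^ y := fun y => (CFC.rpow_eq_cfc_real ha.nonneg).symm
  have hs : ∀ y : ℝ, star (a ^ y) = a ^ y := fun y =>
    (IsSelfAdjoint.of_nonneg (CFC.rpow_nonneg (a := a) (y := y))).star_eq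
  refine ⟨a ^ (1/2 : ℝ), a ^ (-(1/2) : ℝ), h1 _, h1 _, hs _, hs _,
    CFC.rpow_mul_rpow_neg _ ha, CFC.rpow_neg_mul_rpow _ ha, ?_⟩
  rw [← CFC.rpow_add ha.isUnit]
  norm_num
  exact CFC.rpow_one a ha.nonneg

lemma cpow_conj_aux {A : Type*} [CStarAlgebra A] (x u : A) (hx : IsStrictlyPositive x)
    (hu : u ∈ unitary A) (t : ℝ) :
    u * cpow x t * star u = cpow (u * x * star u) t := by
  have hsa : IsSelfAdjoint x := hx.isSelfAdjoint
  have hsp := (CStarAlgebra.isStrictlyPositive_iff_isSelfAdjoint_and_spectrum_pos.mp hx).2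
  have hc : Continuous (Unitary.conjStarAlgAut ℂ A ⟨u, hu⟩) := by
    change Continuous (fun y : A => u * y * star u)
    fun_prop
  exact StarAlgHomClass.map_cfc (S := ℂ) (Unitary.conjStarAlgAut ℂ A ⟨u, hu⟩)
    (fun y : ℝ => y ^ t) x
    (fun y hy => (Real.continuousAt_rpow_const y t (Or.inl (hsp y hy).ne')).continuousWithinAt)
    hc hsa (hsa.map _)

/-- The action `g · a = g a g*` maps geodesics to geodesics. -/
theorem stmt1 {A : Type*} [CStarAlgebra A] (a b : A) (ha : IsPosInv a) (hb : IsPosInv b)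
    (g : Aˣ) (t : ℝ) :
    (g : A) * geo a b t * star (g : A) =
      geo ((g : A) * a * star (g : A)) ((g : A) * b * star (g : A)) t := by
  rw [isPosInv_iff_aux] at ha hb
  have hc : IsStrictlyPositive ((g : A) * a * star (g : A)) :=
    g.isUnit.isStrictlyPositive_star_right_conjugate_iff.mpr ha
  obtain ⟨r, r', hr, hr', sr, sr', e1, e2, e3⟩ := sqrt_facts_aux a ha
  obtain ⟨s, s', hs, hs', ss, ss', f1, f2, f3⟩ := sqrt_facts_aux _ hc
  have hx : IsStrictlyPositive (r' * b * r') :=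
    IsStrictlyPositive.conjugate_of_isUnit_of_isSelfAdjoint b r'
      ⟨⟨r', r, e2, e1⟩, rfl⟩ sr' hb
  have hru : IsUnit r := ⟨⟨r, r', e1, e2⟩, rfl⟩
  have hsu : IsUnit s' := ⟨⟨s', s, f2, f1⟩, rfl⟩
  have huu : (s' * g * r) * star (s' * g * r) = 1 := by
    calc (s' * g * r) * star (s' * g * r) = s' * (g * (r * r) * star (g : A)) * s' := by
          simp only [star_mul, sr, ss', mul_assoc]
      _ = (s' * s) * (s * s') := by rw [e3, ← f3]; simp only [mul_assoc]
      _ = 1 := by rw [f1, f2, one_mul]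
  have hu : s' * g * r ∈ unitary A := by
    refine Unitary.mem_iff.mpr ⟨?_, huu⟩
    have hunit : IsUnit (s' * g * r) := (hsu.mul g.isUnit).mul hru
    apply hunit.mul_left_cancel
    rw [← mul_assoc, huu, one_mul, mul_one]
  have key := cpow_conj_aux _ _ hx hu t
  have hconj : (s' * g * r) * (r' * b * r') * star (s' * g * r)
      = s' * (g * b * star (g : A)) * s' := by
    calc _ = s' * g * (r * r') * b * (r' * r) * star (g : A) * s' := by
          simp only [star_mul, sr, ss', mul_assoc]
      _ = _ := by rw [e1, e2]; simp only [mul_assoc, one_mul]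
  rw [hconj] at key
  unfold geo
  rw [hr, hr', hs, hs', ← key]
  symm
  calc _ = (s * s') * (g * r * cpow (r' * b * r') t * r * star (g : A)) * (s' * s) := by
        simp only [star_mul, sr, ss', mul_assoc]
    _ = _ := by rw [f1, f2]; simp only [mul_assoc, one_mul, mul_one]
end

section
/- Let A be a unital complex C*-algebra, let a, b be positive invertible elements of A and let g ∈ A be invertible. Then d(g a g*, g b g*) = d(a, b), where d(a,b) = ‖log(a^{-1/2} b a^{-1/2})‖; i.e. the action g·a = g a g* of the invertible group on the cone of positive invertibles is isometric for the metric d. -/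
lemma cpow_aux {A : Type*} [CStarAlgebra A] (x : A) (hx : IsPosInv x) :
    ∃ p : Aˣ, (p : A) = cpow x (-(1/2)) ∧ IsSelfAdjoint (p : A) ∧ x * ((p : A) * p) = 1 := by
  obtain ⟨hs, hp⟩ := hx
  have hc : ∀ t : ℝ, ContinuousOn (fun y : ℝ => y ^ t) (spectrum ℝ x) := fun t y hy =>
    (Real.continuousAt_rpow_const y t (Or.inl (ne_of_gt (hp hy)))).continuousWithinAt
  have hm : ∀ s t : ℝ, cpow x s * cpow x t = cpow x (s + t) := by
    intro s t
    unfold cpow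
    rw [← cfc_mul _ _ x (hc s) (hc t)]
    exact cfc_congr fun y hy => (Real.rpow_add (hp hy) s t).symm
  have h0 : cpow x 0 = 1 := by
    unfold cpow
    simp only [Real.rpow_zero]
    exact cfc_const_one ℝ x
  have h1 : cpow x 1 = x := by
    unfold cpow
    simp only [Real.rpow_one]
    exact cfc_id' ℝ x
  refine ⟨⟨cpow x (-(1/2)), cpow x (1/2), ?_, ?_⟩, rfl, ?_, ?_⟩
  · rw [hm]; simpa using h0
  · rw [hm]; simpa using h0
  · exact cfc_predicate _ x
  · show x * (cpow x (-(1/2)) * cpow x (-(1/2))) = 1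
    nth_rewrite 1 [← h1]
    rw [hm, hm, ← h0]
    norm_num

lemma IsPosInv.conj_aux {A : Type*} [CStarAlgebra A] (a : A) (ha : IsPosInv a) (g : Aˣ) :
    IsPosInv ((g : A) * a * star (g : A)) := by
  letI := CStarAlgebra.spectralOrder A
  haveI := CStarAlgebra.spectralOrderedRing A
  have h := CStarAlgebra.isStrictlyPositive_iff_isSelfAdjoint_and_spectrum_pos.2
    ⟨ha.1, fun x hx => ha.2 hx⟩
  have hn : 0 ≤ (g : A) * a * star (g : A) := star_right_conjugate_nonneg h.nonneg _
  have hu : IsUnit ((g : A) * a * star (g : A)) := (g.isUnit.mul h.isUnit).mul g.isUnit.star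
  exact ⟨.of_nonneg hn, fun x hx => (spectrum_nonneg_of_nonneg hn hx).lt_of_ne' (by
    rintro rfl; exact spectrum.zero_notMem ℝ hu hx)⟩

lemma clog_norm_le_aux {A : Type*} [CStarAlgebra A] (x y : A) (hx : IsPosInv x) 
    (h : spectrum ℝ x = spectrum ℝ y) (hy : IsPosInv y) : ‖clog x‖ ≤ ‖clog y‖ := by
  have hc : ∀ z : A, IsPosInv z → ContinuousOn Real.log (spectrum ℝ z) := fun z hz t ht =>
    (Real.continuousAt_log (ne_of_gt (hz.2 ht))).continuousWithinAt
  unfold clog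
  rw [norm_cfc_le_iff _ _ (norm_nonneg _) (hc x hx) hx.1, h,
    ← norm_cfc_le_iff _ _ (norm_nonneg _) (hc y hy) hy.1]

/-- The action `g · a = g a g*` is isometric for the metric
`d(a, b) = ‖log (a^{-1/2} b a^{-1/2})‖`. -/
theorem stmt2 {A : Type*} [CStarAlgebra A] (a b : A) (ha : IsPosInv a) (hb : IsPosInv b)
    (g : Aˣ) :
    dd ((g : A) * a * star (g : A)) ((g : A) * b * star (g : A)) = dd a b := by
  obtain ⟨p, hp, hps, hpa⟩ := cpow_aux a ha
  obtain ⟨q, hq, hqs, hqa⟩ := cpow_aux _ (ha.conj_aux a g)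
  unfold dd
  rw [← hp, ← hq]
  have h1 : IsPosInv ((p : A) * b * p) := by
    simpa only [hps.star_eq] using hb.conj_aux b p
  have h2 : IsPosInv ((q : A) * (g * b * star (g : A)) * q) := by
    simpa only [hqs.star_eq] using (hb.conj_aux b g).conj_aux _ q
  have key : star (g : A) * ((q : A) * q) = p * p * (↑g⁻¹ : A) := by
    have hpa' : (p : A) * p * a = 1 := by
      have := congrArg star hpa
      simpa [hps.star_eq, ha.1.star_eq] using this
    calc star (g : A) * ((q : A) * q)
        = ((p : A) * p * a) * ((↑g⁻¹ : A) * g) * star (g : A) * ((q : A) * q) := by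
          rw [hpa']; simp
      _ = (p : A) * p * (↑g⁻¹ : A) * (g * a * star (g : A) * ((q : A) * q)) := by
          have e : a * ((↑g⁻¹ : A) * g) = (↑g⁻¹ : A) * (g * a) := by simp
          rw [mul_assoc ((p : A) * p), e]
          simp only [mul_assoc]
      _ = _ := by rw [hqa, mul_one]
  have hs : spectrum ℝ ((q : A) * (g * b * star (g : A)) * q) = spectrum ℝ ((p : A) * b * p) := by
    rw [← spectrum.units_conjugate (R := ℝ) (u := p * g⁻¹ * q⁻¹)
      (a := (q : A) * (g * b * star (g : A)) * q)]
    congr 1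
    calc _ = (p : A) * b * (star (g : A) * ((q : A) * q)) * g * (↑p⁻¹ : A) := by
          simp [mul_assoc]
      _ = _ := by rw [key]; simp [mul_assoc]
  exact le_antisymm (clog_norm_le_aux _ _ h2 hs h1) (clog_norm_le_aux _ _ h1 hs.symm h2)
end

section
/- Let A be a unital complex C*-algebra and let a, b, c, e be positive invertible elements of A. Then for every t ∈ [0,1], d(γ_{a,b}(t), γ_{c,e}(t)) ≤ (1−t)·d(a,c) + t·d(b,e), where γ_{a,b}(t) = a^{1/2}(a^{-1/2} b a^{-1/2})^t a^{1/2} and d(x,y) = ‖log(x^{-1/2} y x^{-1/2})‖. That is, the distance between two geodesics in the cone of positive invertibles is a convex function of the parameter. -/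
section Helpers

variable {A : Type*} [CStarAlgebra A] [PartialOrder A] [StarOrderedRing A]

lemma aux_pos {a : A} : IsPosInv a ↔ IsStrictlyPositive a := by
  rw [CStarAlgebra.isStrictlyPositive_iff_isSelfAdjoint_and_spectrum_pos]
  rfl

lemma aux_cpow {a : A} (ha : IsStrictlyPositive a) (t : ℝ) : cpow a t = a ^ t :=
  (CFC.rpow_eq_cfc_real ha.nonneg).symm

lemma aux_add {a : A} (ha : IsStrictlyPositive a) (s t : ℝ) : a ^ s * a ^ t = a ^ (s + t) :=
  (CFC.rpow_add ha.isUnit).symm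

lemma aux_sa {a : A} (t : ℝ) : star (a ^ t) = a ^ t :=
  (CFC.rpow_nonneg (a := a) (y := t)).isSelfAdjoint.star_eq

lemma aux_conj {a b : A} (ha : IsStrictlyPositive a) (hb : IsStrictlyPositive b) (t : ℝ) :
    IsStrictlyPositive (a ^ t * b * a ^ t) :=
  IsStrictlyPositive.conjugate_of_isUnit_of_isSelfAdjoint b (a ^ t) (ha.rpow a t).isUnit
    (aux_sa t) hb

lemma aux_half {a : A} (ha : IsStrictlyPositive a) :
    a ^ (1/2 : ℝ) * a ^ (1/2 : ℝ) = a := by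
  rw [aux_add ha]; norm_num; exact CFC.rpow_one a ha.nonneg

lemma aux_h1 {a : A} (ha : IsStrictlyPositive a) :
    a ^ (1/2 : ℝ) * a ^ (-(1/2) : ℝ) = 1 := CFC.rpow_mul_rpow_neg _ ha

lemma aux_h2 {a : A} (ha : IsStrictlyPositive a) :
    a ^ (-(1/2) : ℝ) * a ^ (1/2 : ℝ) = 1 := CFC.rpow_neg_mul_rpow _ ha

lemma aux_geo {a b : A} (ha : IsStrictlyPositive a) (hb : IsStrictlyPositive b) (t : ℝ) :
    geo a b t = a ^ (1/2 : ℝ) * (a ^ (-(1/2) : ℝ) * b * a ^ (-(1/2) : ℝ)) ^ t * a ^ (1/2 : ℝ) := by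
  unfold geo
  rw [aux_cpow ha, aux_cpow ha, aux_cpow (aux_conj ha hb _)]

lemma aux_geo_pos {a b : A} (ha : IsStrictlyPositive a) (hb : IsStrictlyPositive b) (t : ℝ) :
    IsStrictlyPositive (geo a b t) := by
  rw [aux_geo ha hb]
  exact aux_conj ha ((aux_conj ha hb _).rpow _ t) _

lemma aux_geo_mono {a b c : A} (ha : IsStrictlyPositive a) (hb : IsStrictlyPositive b)
    (hc : IsStrictlyPositive c) (h : b ≤ c) {t : ℝ} (ht : t ∈ Set.Icc (0 : ℝ) 1) :
    geo a b t ≤ geo a c t := by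
  rw [aux_geo ha hb, aux_geo ha hc]
  refine IsSelfAdjoint.conjugate_le_conjugate ?_ (aux_sa _)
  refine CFC.rpow_le_rpow ht ?_
  exact IsSelfAdjoint.conjugate_le_conjugate h (aux_sa _)

lemma aux_smul_pos {a : A} (ha : IsStrictlyPositive a) {k : ℝ} (hk : 0 < k) :
    IsStrictlyPositive (k • a) := IsStrictlyPositive.smul hk ha

lemma aux_cont {a : A} (ha : IsStrictlyPositive a) (t : ℝ) :
    ContinuousOn (fun x : ℝ => x ^ t) (spectrum ℝ a) := by
  intro x hx
  exact (Real.continuousAt_rpow_const x t (Or.inl (ha.spectrum_pos hx).ne')).continuousWithinAt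

lemma aux_smul {a : A} (ha : IsStrictlyPositive a) {k : ℝ} (hk : 0 < k) (t : ℝ) :
    (k • a) ^ t = (k ^ t) • a ^ t := by
  have hsa := ha.isSelfAdjoint
  rw [CFC.rpow_eq_cfc_real (aux_smul_pos ha hk).nonneg, CFC.rpow_eq_cfc_real ha.nonneg,
    ← cfc_smul _ _ _ (aux_cont ha t)]
  have hk' := aux_cont (aux_smul_pos ha hk) t
  have himg : (fun x : ℝ => k • x) '' spectrum ℝ a ⊆ Set.Ioi 0 := by
    rintro _ ⟨x, hx, rfl⟩
    exact mul_pos hk (ha.spectrum_pos hx)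
  have hcont : ContinuousOn (fun x : ℝ => x ^ t) ((fun x : ℝ => k • x) '' spectrum ℝ a) := by
    intro x hx
    exact (Real.continuousAt_rpow_const x t (Or.inl (himg hx).ne')).continuousWithinAt
  rw [← cfc_comp_smul k (fun x : ℝ => x ^ t) a hcont]
  refine cfc_congr fun x hx => ?_
  simp only [smul_eq_mul]
  exact Real.mul_rpow hk.le (ha.spectrum_pos hx).le

lemma aux_geo_smul {a b : A} (ha : IsStrictlyPositive a) (hb : IsStrictlyPositive b)
    {k : ℝ} (hk : 0 < k) (t : ℝ) :
    geo a (k • b) t = (k ^ t) • geo a b t := by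
  rw [aux_geo ha hb, aux_geo ha (aux_smul_pos hb hk), mul_smul_comm, smul_mul_assoc,
    aux_smul (aux_conj ha hb _) hk, mul_smul_comm, smul_mul_assoc]

lemma aux_unitary {z u : A} (hz : IsStrictlyPositive z) (h1 : star u * u = 1)
    (h2 : u * star u = 1) (t : ℝ) : (u * z * star u) ^ t = u * z ^ t * star u := by
  have hu : IsUnit u := ⟨⟨u, star u, h2, h1⟩, rfl⟩
  have hw : IsStrictlyPositive (u * z * star u) :=
    hu.isStrictlyPositive_star_right_conjugate_iff.mpr hz
  let U : unitary A := ⟨u, by rw [Unitary.mem_iff]; exact ⟨h1, h2⟩⟩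
  have hc : Continuous (Unitary.conjStarAlgAut ℝ A U) := by
    have : (Unitary.conjStarAlgAut ℝ A U : A → A) = fun x => u * x * star u := by
      ext x; exact Unitary.conjStarAlgAut_apply U x
    rw [this]; fun_prop
  have := StarAlgHomClass.map_cfc (S := ℝ) (R := ℝ) (p := IsSelfAdjoint) (q := IsSelfAdjoint)
    (Unitary.conjStarAlgAut ℝ A U) (fun x : ℝ => x ^ t) z (aux_cont hz t) hc hz.isSelfAdjoint
    hw.isSelfAdjoint
  rw [Unitary.conjStarAlgAut_apply, Unitary.conjStarAlgAut_apply] at this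
  rw [CFC.rpow_eq_cfc_real hw.nonneg, CFC.rpow_eq_cfc_real hz.nonneg]
  exact this.symm

lemma aux_symm {a b : A} (ha : IsStrictlyPositive a) (hb : IsStrictlyPositive b) (t : ℝ) :
    geo b a (1 - t) = geo a b t := by
  rw [aux_geo ha hb, aux_geo hb ha]
  have hz := aux_conj ha hb (-(1/2))
  have hap := aux_half ha
  have ha1 := aux_h1 ha
  have ha2 := aux_h2 ha
  have hbp := aux_half hb
  have hb1 := aux_h1 hb
  have hb2 := aux_h2 hb
  have hsp : star (a ^ (-(1/2) : ℝ)) = a ^ (-(1/2) : ℝ) := aux_sa _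
  have hsq : star (b ^ (1/2 : ℝ)) = b ^ (1/2 : ℝ) := aux_sa _
  set z := a ^ (-(1/2) : ℝ) * b * a ^ (-(1/2) : ℝ) with hzdef
  set w := b ^ (-(1/2) : ℝ) * a * b ^ (-(1/2) : ℝ) with hwdef
  generalize a ^ (-(1/2) : ℝ) = p' at *
  generalize a ^ (1/2 : ℝ) = p at *
  generalize b ^ (-(1/2) : ℝ) = q' at *
  generalize b ^ (1/2 : ℝ) = q at *
  have hz1 : z ^ (-1 : ℝ) = p * q' * q' * p := by
    have e1 : z ^ (-1 : ℝ) * z = 1 := by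
      have := aux_add hz (-1) 1
      rwa [CFC.rpow_one z hz.nonneg, neg_add_cancel, CFC.rpow_zero z hz.nonneg] at this
    have e2 : z * (p * q' * q' * p) = 1 := by
      rw [hzdef, ← hbp]
      calc p' * (q * q) * p' * (p * q' * q' * p) = p' * q * (q * (p' * p) * q') * q' * p := by
            noncomm_ring
        _ = 1 := by
            rw [ha2, mul_one, hb1, mul_one, mul_assoc p', hb1, mul_one, ha2]
    exact left_inv_eq_right_inv e1 e2
  set s := z ^ (-(1/2) : ℝ) with hs
  have hss : star s = s := aux_sa _
  have hszs : s * z * s = 1 := by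
    have h1 : s * z = z ^ (1/2 : ℝ) := by
      have := aux_add hz (-(1/2)) 1
      rw [CFC.rpow_one z hz.nonneg] at this
      rw [hs, this]; norm_num
    rw [h1]; exact aux_h1 hz
  have hs2 : s * s = z ^ (-1 : ℝ) := by rw [hs, aux_add hz]; norm_num
  have hxx : star (q * p') = p' * q := by rw [star_mul, hsp, hsq]
  have hus : star (q * p' * s) = s * (p' * q) := by rw [star_mul, hss, hxx]
  have hqz : q * (q * p') = p * z := by
    rw [hzdef, ← hbp, ← mul_assoc, ← mul_assoc, ← mul_assoc, ha1, one_mul]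
  have hzq : (p' * q) * q = z * p := by
    rw [hzdef, mul_assoc (p' * b), ha2, mul_one, ← hbp, mul_assoc]
  have hu1 : star (q * p' * s) * (q * p' * s) = 1 := by
    rw [hus, ← hszs, hzdef, ← hbp]; noncomm_ring
  have hu2 : (q * p' * s) * star (q * p' * s) = 1 := by
    rw [hus]
    calc q * p' * s * (s * (p' * q)) = q * p' * (s * s) * p' * q := by noncomm_ring
      _ = q * (p' * p) * q' * (q' * (p * p') * q) := by rw [hs2, hz1]; noncomm_ring
      _ = 1 := by rw [ha2, ha1, mul_one, mul_one, hb1, hb2, mul_one]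
  have hw : w = (q * p' * s) * z ^ (-1 : ℝ) * star (q * p' * s) := by
    have hc : s * z ^ (-1 : ℝ) * s = z ^ (-1 : ℝ) * z ^ (-1 : ℝ) := by
      rw [hs, aux_add hz, aux_add hz, aux_add hz]; norm_num
    rw [hus]
    calc w = (q * (p' * p) * q') * (q' * p) * (p * q' ) * (q' * (p * p') * q) := by
            rw [ha2, ha1, mul_one, mul_one, hb1, hb2, hwdef, ← hap]; noncomm_ring
      _ = q * p' * (z ^ (-1 : ℝ) * z ^ (-1 : ℝ)) * (p' * q) := by rw [hz1]; noncomm_ring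
      _ = q * p' * (s * z ^ (-1 : ℝ) * s) * (p' * q) := by rw [hc]
      _ = _ := by noncomm_ring
  rw [hw, aux_unitary (hz.rpow z (-1)) hu1 hu2, hus,
    CFC.rpow_rpow z (-1) (1 - t) (by norm_num) hz]
  calc q * (q * p' * s * z ^ (-1 * (1 - t)) * (s * (p' * q))) * q
      = q * (q * p') * (s * z ^ (-1 * (1 - t)) * s) * ((p' * q) * q) := by noncomm_ring
    _ = p * (z ^ (1 : ℝ) * (s * z ^ (-1 * (1 - t)) * s) * z ^ (1 : ℝ)) * p := by
        rw [hqz, hzq, CFC.rpow_one z hz.nonneg]; noncomm_ring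
    _ = p * z ^ t * p := by
        rw [hs, aux_add hz, aux_add hz, aux_add hz, aux_add hz]
        congr 3; ring

lemma aux_dd {x y : A} (hx : IsStrictlyPositive x) (hy : IsStrictlyPositive y) {r : ℝ}
    (hr : 0 ≤ r) : dd x y ≤ r ↔ x ≤ Real.exp r • y ∧ y ≤ Real.exp r • x := by
  have hz := aux_conj hx hy (-(1/2))
  have hzsa := hz.isSelfAdjoint
  have hxx := CFC.conjugate_rpow_neg_one_half x hx
  have hp := aux_half hx
  have h1 := aux_h1 hx
  have h2 := aux_h2 hx
  have hlog : ContinuousOn Real.log (spectrum ℝ (x ^ (-(1/2) : ℝ) * y * x ^ (-(1/2) : ℝ))) := by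
    intro s hs
    exact (Real.continuousAt_log (hz.spectrum_pos hs).ne').continuousWithinAt
  have hback : x ^ (1/2 : ℝ) * (x ^ (-(1/2) : ℝ) * y * x ^ (-(1/2) : ℝ)) * x ^ (1/2 : ℝ) = y := by
    rw [← mul_assoc, ← mul_assoc, h1, one_mul, mul_assoc, h2, mul_one]
  have hE := Real.exp_pos r
  have hleft : x ≤ Real.exp r • y ↔
      algebraMap ℝ A (Real.exp (-r)) ≤ x ^ (-(1/2) : ℝ) * y * x ^ (-(1/2) : ℝ) := by
    rw [Algebra.algebraMap_eq_smul_one]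
    constructor
    · intro h
      have := IsSelfAdjoint.conjugate_le_conjugate h (aux_sa (a := x) (-(1/2)))
      rw [hxx, mul_smul_comm, smul_mul_assoc] at this
      have := smul_le_smul_of_nonneg_left this (Real.exp_pos (-r)).le
      rwa [smul_smul, ← Real.exp_add, neg_add_cancel, Real.exp_zero, one_smul] at this
    · intro h
      have := IsSelfAdjoint.conjugate_le_conjugate h (aux_sa (a := x) (1/2))
      rw [hback, mul_smul_comm, smul_mul_assoc, mul_one, hp] at this
      have := smul_le_smul_of_nonneg_left this hE.le
      rwa [smul_smul, ← Real.exp_add, add_neg_cancel, Real.exp_zero, one_smul] at this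
  have hright : y ≤ Real.exp r • x ↔
      x ^ (-(1/2) : ℝ) * y * x ^ (-(1/2) : ℝ) ≤ algebraMap ℝ A (Real.exp r) := by
    rw [Algebra.algebraMap_eq_smul_one]
    constructor
    · intro h
      have := IsSelfAdjoint.conjugate_le_conjugate h (aux_sa (a := x) (-(1/2)))
      rwa [mul_smul_comm, smul_mul_assoc, hxx] at this
    · intro h
      have := IsSelfAdjoint.conjugate_le_conjugate h (aux_sa (a := x) (1/2))
      rwa [hback, mul_smul_comm, smul_mul_assoc, mul_one, hp] at this
  rw [hleft, hright, algebraMap_le_iff_le_spectrum hzsa, le_algebraMap_iff_spectrum_le hzsa]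
  unfold dd clog
  rw [aux_cpow hx, norm_cfc_le_iff _ _ hr hlog hzsa, ← forall₂_and]
  refine forall₂_congr fun s hs => ?_
  have hs0 : 0 < s := hz.spectrum_pos hs
  rw [Real.norm_eq_abs, abs_le, Real.le_log_iff_exp_le hs0, Real.log_le_iff_le_exp hs0]

lemma aux_geo_le {a b c e : A} (ha : IsStrictlyPositive a) (hb : IsStrictlyPositive b)
    (hc : IsStrictlyPositive c) (he : IsStrictlyPositive e) {r s : ℝ}
    (h1 : c ≤ Real.exp r • a) (h2 : e ≤ Real.exp s • b) {t : ℝ} (ht : t ∈ Set.Icc (0 : ℝ) 1) :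
    geo c e t ≤ Real.exp ((1 - t) * r + t * s) • geo a b t := by
  have hr := Real.exp_pos r
  have hs := Real.exp_pos s
  have ht' : 1 - t ∈ Set.Icc (0 : ℝ) 1 := ⟨by linarith [ht.2], by linarith [ht.1]⟩
  calc geo c e t ≤ geo c (Real.exp s • b) t := aux_geo_mono hc he (aux_smul_pos hb hs) h2 ht
    _ = (Real.exp s ^ t) • geo b c (1 - t) := by rw [aux_geo_smul hc hb hs, aux_symm hc hb]
    _ ≤ (Real.exp s ^ t) • geo b (Real.exp r • a) (1 - t) :=
        smul_le_smul_of_nonneg_left (aux_geo_mono hb hc (aux_smul_pos ha hr) h1 ht')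
          (by positivity)
    _ = Real.exp ((1 - t) * r + t * s) • geo a b t := by
        rw [aux_geo_smul hb ha hr, aux_symm ha hb, smul_smul, ← Real.exp_mul, ← Real.exp_mul,
          ← Real.exp_add]
        congr 2; ring

end Helpers

/-- The distance between two geodesics in the cone of positive invertibles is a
convex function of the parameter. -/
theorem stmt3 {A : Type*} [CStarAlgebra A] (a b c e : A)
    (ha : IsPosInv a) (hb : IsPosInv b) (hc : IsPosInv c) (he : IsPosInv e)
    (t : ℝ) (ht : t ∈ Set.Icc (0 : ℝ) 1) :
    dd (geo a b t) (geo c e t) ≤ (1 - t) * dd a c + t * dd b e := by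
  let _ := CStarAlgebra.spectralOrder A
  have := CStarAlgebra.spectralOrderedRing A
  rw [aux_pos] at ha hb hc he
  have h0 : 0 ≤ dd a c := norm_nonneg _
  have h0' : 0 ≤ dd b e := norm_nonneg _
  have h1 := (aux_dd ha hc h0).mp le_rfl
  have h2 := (aux_dd hb he h0').mp le_rfl
  rw [aux_dd (aux_geo_pos ha hb t) (aux_geo_pos hc he t)
    (add_nonneg (mul_nonneg (by linarith [ht.2]) h0) (mul_nonneg ht.1 h0'))]
  exact ⟨aux_geo_le hc he ha hb h1.1 h2.1 ht, aux_geo_le ha hb hc he h1.2 h2.2 ht⟩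
end

section
/- Let A be a unital complex C*-algebra and H a subgroup of Aˣ. If a and b are positive invertible elements of A satisfying h a h* = a and h b h* = b for all h ∈ H, then for every t ∈ [0,1] the point γ_{a,b}(t) = a^{1/2}(a^{-1/2} b a^{-1/2})^t a^{1/2} also satisfies h γ_{a,b}(t) h* = γ_{a,b}(t) for all h ∈ H. In particular, the fixed point set P^H of the action h·a = h a h* is geodesically convex (it contains the geodesic between any two of its points). -/
theorem cpow_mul_add {A : Type*} [CStarAlgebra A] {a : A} (ha : IsPosInv a) (x y : ℝ) :
    cpow a x * cpow a y = cpow a (x + y) := by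
  have hc : ∀ z : ℝ, ContinuousOn (fun x : ℝ => x ^ z) (spectrum ℝ a) := fun z =>
    continuousOn_id.rpow_const fun w hw => Or.inl (ne_of_gt (ha.2 hw))
  unfold cpow
  rw [← cfc_mul _ _ a (hc x) (hc y)]
  exact cfc_congr fun w hw => (Real.rpow_add (ha.2 hw) x y).symm

theorem cpow_zero' {A : Type*} [CStarAlgebra A] {a : A} (ha : IsPosInv a) :
    cpow a 0 = 1 := by
  unfold cpow
  simp only [Real.rpow_zero]
  exact cfc_const_one ℝ a ha.1

theorem cpow_one' {A : Type*} [CStarAlgebra A] {a : A} (ha : IsPosInv a) :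
    cpow a 1 = a := by
  unfold cpow
  simp only [Real.rpow_one]
  exact cfc_id' ℝ a ha.1

/-- The fixed point set `P^H` of the action `h · a = h a h*` is geodesically convex. -/
theorem stmt4 {A : Type*} [CStarAlgebra A] (H : Subgroup Aˣ) (a b : A)
    (ha : IsPosInv a) (hb : IsPosInv b)
    (hfa : ∀ h ∈ H, (h : A) * a * star (h : A) = a)
    (hfb : ∀ h ∈ H, (h : A) * b * star (h : A) = b)
    (t : ℝ) (ht : t ∈ Set.Icc (0 : ℝ) 1) :
    ∀ h ∈ H, (h : A) * geo a b t * star (h : A) = geo a b t := by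
  intro h hh
  have hA := hfa h hh
  have hB := hfb h hh
  have hss : cpow a (1/2) * cpow a (1/2) = a := by
    rw [cpow_mul_add ha, add_halves, cpow_one' ha]
  have hsr : cpow a (1/2) * cpow a (-(1/2)) = 1 := by
    rw [cpow_mul_add ha, add_neg_cancel, cpow_zero' ha]
  have hrs : cpow a (-(1/2)) * cpow a (1/2) = 1 := by
    rw [cpow_mul_add ha, neg_add_cancel, cpow_zero' ha]
  unfold geo
  generalize cpow a (1/2) = s at *
  generalize cpow a (-(1/2)) = r at *
  have hg : (↑h⁻¹ : A) * (h : A) = 1 := Units.inv_mul h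
  generalize star (h : A) = k at *
  generalize (↑h⁻¹ : A) = g' at *
  generalize (h : A) = g at *
  have hsr' : ∀ x, s * (r * x) = x := fun x => by rw [← mul_assoc, hsr, one_mul]
  have hrs' : ∀ x, r * (s * x) = x := fun x => by rw [← mul_assoc, hrs, one_mul]
  have huw : (r * g * s) * (s * k * r) = 1 := by
    calc (r * g * s) * (s * k * r) = r * (g * (s * s) * k) * r := by simp only [mul_assoc]
      _ = 1 := by rw [hss, hA, ← hss, ← mul_assoc, hrs, one_mul, hsr]
  have hvu : (r * g' * s) * (r * g * s) = 1 := by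
    calc (r * g' * s) * (r * g * s) = r * (g' * g) * s := by
          simp only [mul_assoc, hsr']
      _ = 1 := by rw [hg, mul_one, hrs]
  have hwu : (s * k * r) * (r * g * s) = 1 := by
    rw [← left_inv_eq_right_inv hvu huw, hvu]
  have hcw : (r * g * s) * (r * b * r) * (s * k * r) = r * b * r := by
    calc (r * g * s) * (r * b * r) * (s * k * r) = r * (g * b * k) * r := by
          simp only [mul_assoc, hsr', hrs']
      _ = r * b * r := by rw [hB]
  have hcomm : Commute (r * b * r) (r * g * s) := by
    calc (r * b * r) * (r * g * s)
        = ((r * g * s) * (r * b * r) * (s * k * r)) * (r * g * s) := by rw [hcw]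
      _ = (r * g * s) * (r * b * r) := by rw [mul_assoc, hwu, mul_one]
  have hct : cpow (r * b * r) t * (r * g * s) = (r * g * s) * cpow (r * b * r) t :=
    hcomm.cfc_real _
  generalize cpow (r * b * r) t = d at *
  calc g * (s * d * s) * k = s * ((r * g * s) * d * (s * k * r)) * s := by
        simp only [mul_assoc, hsr', hrs, mul_one]
    _ = s * d * s := by rw [← hct, mul_assoc d, huw, mul_one]
end

section
/- Let A be a unital complex C*-algebra and H a unitarizable subgroup of Aˣ (there exists an invertible s ∈ A with s⁻¹ h s unitary for all h ∈ H). Then dist(O_H(1), P^H) = dist(1, P^H) = log(Sim(H)), where O_H(1) = {h h* : h ∈ H}, P^H = {a positive invertible : h a h* = a for all h ∈ H}, dist denotes the infimum of the metric d(a,b) = ‖log(a^{-1/2} b a^{-1/2})‖ between the corresponding sets, and Sim(H) = inf{‖s‖‖s⁻¹‖ : s ∈ Aˣ, s⁻¹ H s consists of unitaries}. -/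
section aux

variable {A : Type*} [CStarAlgebra A]

theorem aux_posInv_mul_star (t : Aˣ) : IsPosInv ((t : A) * star (t : A)) := by
  refine ⟨IsSelfAdjoint.mul_star_self _, fun x hx => ?_⟩
  have h0 : 0 ≤ x := by
    have := spectrum_star_mul_self_nonneg (b := star (t : A)) x (by simpa using hx)
    exact this
  have hne : x ≠ 0 := by
    rintro rfl
    exact (spectrum.zero_notMem_iff ℝ).2 (t.isUnit.mul t.isUnit.star) hx
  exact lt_of_le_of_ne h0 hne.symm

theorem aux_log_contOn {a : A} (ha : IsPosInv a) : ContinuousOn Real.log (spectrum ℝ a) :=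
  Real.continuousOn_log.mono fun _ hx => (ne_of_gt (ha.2 hx))

theorem aux_rpow_contOn {a : A} (ha : IsPosInv a) (t : ℝ) :
    ContinuousOn (fun x : ℝ => x ^ t) (spectrum ℝ a) := fun x hx =>
  (Real.continuousAt_rpow_const x t (Or.inl (ne_of_gt (ha.2 hx)))).continuousWithinAt

theorem aux_clog_le_iff {a : A} (ha : IsPosInv a) {c : ℝ} (hc : 0 ≤ c) :
    ‖clog a‖ ≤ c ↔ ∀ x ∈ spectrum ℝ a, |Real.log x| ≤ c :=
  norm_cfc_le_iff Real.log a hc (aux_log_contOn ha) ha.1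

theorem aux_clog_eq {a b : A} (ha : IsPosInv a) (hb : IsPosInv b)
    (h : spectrum ℝ a = spectrum ℝ b) : ‖clog a‖ = ‖clog b‖ := by
  apply le_antisymm
  · rw [aux_clog_le_iff ha (norm_nonneg _), h]
    exact (aux_clog_le_iff hb (norm_nonneg _)).1 le_rfl
  · rw [aux_clog_le_iff hb (norm_nonneg _), ← h]
    exact (aux_clog_le_iff ha (norm_nonneg _)).1 le_rfl

theorem aux_clog_le [Nontrivial A] (t : Aˣ) {κ : ℝ} (hκ : 1 ≤ κ) (h1 : ‖(t : A)‖ * ‖(t : A)‖ ≤ κ)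
    (h2 : ‖(↑t⁻¹ : A)‖ * ‖(↑t⁻¹ : A)‖ ≤ κ) :
    ‖clog ((t : A) * star (t : A))‖ ≤ Real.log κ := by
  have hp := aux_posInv_mul_star t
  rw [aux_clog_le_iff hp (Real.log_nonneg hκ)]
  intro x hx
  have hx0 : 0 < x := hp.2 hx
  have hxa : x ≤ κ := by
    have := spectrum.norm_le_norm_of_mem hx
    rw [CStarRing.norm_self_mul_star, Real.norm_eq_abs, abs_of_pos hx0] at this
    linarith
  have hxb : x⁻¹ ≤ κ := by
    have hx' : ((Units.mk0 x hx0.ne' : ℝˣ) : ℝ) ∈ spectrum ℝ ((t * star t : Aˣ) : A) := by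
      simpa using hx
    rw [spectrum.inv_mem_iff] at hx'
    have := spectrum.norm_le_norm_of_mem hx'
    have e : ((t * star t : Aˣ)⁻¹ : Aˣ) = star t⁻¹ * t⁻¹ := by simp
    rw [e, Units.val_mul, Units.coe_star, CStarRing.norm_star_mul_self] at this
    simp only [Units.val_inv_eq_inv_val, Units.val_mk0, Real.norm_eq_abs] at this
    exact (le_abs_self _).trans (this.trans h2)
  rw [abs_le]
  constructor
  · have := Real.log_le_log (inv_pos.2 hx0) hxb
    rw [Real.log_inv] at this
    linarith
  · exact Real.log_le_log hx0 hxa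

theorem aux_cpow_mul {a : A} (ha : IsPosInv a) (s t : ℝ) :
    cpow a s * cpow a t = cpow a (s + t) := by
  unfold cpow
  rw [← cfc_mul _ _ a (aux_rpow_contOn ha s) (aux_rpow_contOn ha t)]
  exact cfc_congr fun x hx => (Real.rpow_add (ha.2 hx) s t).symm

theorem aux_cpow_zero {a : A} (ha : IsPosInv a) : cpow a 0 = 1 := by
  have := ha.1
  unfold cpow
  simp only [Real.rpow_zero]
  exact cfc_const_one ℝ a

theorem aux_cpow_one {a : A} (ha : IsPosInv a) : cpow a 1 = a := by
  have := ha.1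
  unfold cpow
  simp only [Real.rpow_one]
  exact cfc_id' ℝ a

theorem aux_cpow_star (a : A) (t : ℝ) : star (cpow a t) = cpow a t :=
  (cfc_predicate (p := IsSelfAdjoint) (fun x : ℝ => x ^ t) a).star_eq

theorem aux_cpow_norm {a : A} (ha : IsPosInv a) (t : ℝ) :
    ‖cpow a t‖ ≤ Real.exp (|t| * ‖clog a‖) := by
  apply norm_cfc_le (Real.exp_pos _).le
  intro x hx
  have hx0 : 0 < x := ha.2 hx
  have := (aux_clog_le_iff ha (norm_nonneg _)).1 le_rfl x hx
  rw [Real.norm_eq_abs, abs_of_pos (Real.rpow_pos_of_pos hx0 t), Real.rpow_def_of_pos hx0]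
  apply Real.exp_le_exp.2
  calc Real.log x * t ≤ |Real.log x * t| := le_abs_self _
    _ = |t| * |Real.log x| := by rw [abs_mul, mul_comm]
    _ ≤ _ := by gcongr

/-- the power as a unit -/
noncomputable def auxPowUnit {a : A} (ha : IsPosInv a) (t : ℝ) : Aˣ where
  val := cpow a t
  inv := cpow a (-t)
  val_inv := by rw [aux_cpow_mul ha, add_neg_cancel, aux_cpow_zero ha]
  inv_val := by rw [aux_cpow_mul ha, neg_add_cancel, aux_cpow_zero ha]

theorem aux_unitary_of_unit (u : Aˣ) (h : (u : A) * star (u : A) = 1) : (u : A) ∈ unitary A := by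
  rw [Unitary.mem_iff]
  refine ⟨?_, h⟩
  have : star (u : A) = ↑u⁻¹ := (Units.inv_eq_of_mul_eq_one_right h).symm
  rw [this, Units.inv_mul]

theorem aux_fixed_of_unitarizer (H : Subgroup Aˣ) (s : Aˣ)
    (hs : ∀ h ∈ H, (↑s⁻¹ : A) * (h : A) * (s : A) ∈ unitary A) :
    (s : A) * star (s : A) ∈ fixedSet H := by
  refine ⟨aux_posInv_mul_star s, fun h hh => ?_⟩
  have h1 := (Unitary.mem_iff.1 (hs h hh)).2
  have h2 : (h : A) * s = s * (↑s⁻¹ * h * s) := by simp [mul_assoc]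
  calc (h : A) * (s * star (s : A)) * star (h : A) = (h * s) * star ((h : A) * s) := by
        simp [mul_assoc]
    _ = s * ((↑s⁻¹ * h * s) * star (↑s⁻¹ * (h : A) * s)) * star (s : A) := by
        rw [h2, star_mul (s : A)]; simp only [mul_assoc]
    _ = s * star (s : A) := by rw [h1, mul_one]

theorem aux_unitarizer_of_fixed (H : Subgroup Aˣ) {a : A} (ha : a ∈ fixedSet H) :
    ∃ s : Aˣ, (∀ h ∈ H, (↑s⁻¹ : A) * (h : A) * (s : A) ∈ unitary A) ∧
      ‖(s : A)‖ * ‖(↑s⁻¹ : A)‖ ≤ Real.exp ‖clog a‖ := by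
  obtain ⟨hp, hf⟩ := ha
  refine ⟨auxPowUnit hp (1/2), fun h hh => ?_, ?_⟩
  · have e1 : cpow a (1/2) * cpow a (1/2) = a := by
      rw [aux_cpow_mul hp]; norm_num [aux_cpow_one hp]
    have e2 : cpow a (-(1/2)) * a * cpow a (-(1/2)) = 1 := by
      nth_rw 2 [← aux_cpow_one hp]
      rw [aux_cpow_mul hp, aux_cpow_mul hp]; norm_num [aux_cpow_zero hp]
    have := aux_unitary_of_unit ((auxPowUnit hp (1/2))⁻¹ * h * auxPowUnit hp (1/2)) (by
      change cpow a (-(1/2)) * h * cpow a (1/2) * star (cpow a (-(1/2)) * h * cpow a (1/2)) = 1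
      rw [star_mul, star_mul, aux_cpow_star, aux_cpow_star]
      calc _ = cpow a (-(1/2)) * (h * (cpow a (1/2) * cpow a (1/2)) * star (h : A))
              * cpow a (-(1/2)) := by simp only [mul_assoc]
        _ = 1 := by rw [e1, hf h hh, e2])
    simpa using this
  · change ‖cpow a (1/2)‖ * ‖cpow a (-(1/2))‖ ≤ _
    calc _ ≤ Real.exp (|1/2| * ‖clog a‖) * Real.exp (|-(1/2)| * ‖clog a‖) := by
          gcongr <;> exact aux_cpow_norm hp _
      _ = _ := by
          rw [← Real.exp_add, abs_neg, abs_of_pos (by norm_num : (0:ℝ) < 1/2)]; congr 1; ring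

theorem aux_dd_one (a : A) : dd 1 a = ‖clog a‖ := by
  have : cpow (1 : A) (-(1/2)) = 1 := by
    unfold cpow
    rw [cfc_apply_one]; simp
  unfold dd
  rw [this, one_mul, mul_one]

theorem aux_dd_orbit (H : Subgroup Aˣ) {h : Aˣ} (hh : h ∈ H) {y : A} (hy : y ∈ fixedSet H) :
    dd ((h : A) * star (h : A)) y = ‖clog y‖ := by
  obtain ⟨hp, hf⟩ := hy
  have hq := aux_posInv_mul_star h
  set b := (h : A) * star (h : A) with hb
  set p := cpow b (-(1/2)) with hpdef
  let w : Aˣ := auxPowUnit hq (-(1/2)) * h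
  have hw : (w : A) = p * h := rfl
  have hps : star p = p := aux_cpow_star _ _
  have hww : (w : A) * star (w : A) = 1 := by
    rw [hw, star_mul, hps]
    calc p * h * (star (h : A) * p) = p * b * p := by simp only [hb, mul_assoc]
      _ = 1 := by
        nth_rw 1 [← aux_cpow_one hq]
        rw [hpdef, aux_cpow_mul hq, aux_cpow_mul hq]; norm_num [aux_cpow_zero hq]
  have hwi : star (w : A) = ↑w⁻¹ := (Units.inv_eq_of_mul_eq_one_right hww).symm
  have key : p * y * p = w * y * star (w : A) := by
    rw [hw, star_mul, hps]
    calc p * y * p = p * (h * y * star (h : A)) * p := by rw [hf h hh]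
      _ = _ := by simp only [mul_assoc]
  have hspec : spectrum ℝ (p * y * p) = spectrum ℝ y := by
    rw [key, hwi, spectrum.units_conjugate]
  refine aux_clog_eq ⟨?_, ?_⟩ hp hspec
  · rw [key]; exact hp.1.conjugate _
  · rw [hspec]; exact hp.2

theorem aux_rescale [Nontrivial A] (H : Subgroup Aˣ) (s : Aˣ)
    (hs : ∀ h ∈ H, (↑s⁻¹ : A) * (h : A) * (s : A) ∈ unitary A) :
    ∃ a ∈ fixedSet H, ‖clog a‖ ≤ Real.log (‖(s : A)‖ * ‖(↑s⁻¹ : A)‖) := by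
  have p1 : 0 < ‖(s : A)‖ := norm_pos_iff.2 s.ne_zero
  have p2 : 0 < ‖(↑s⁻¹ : A)‖ := norm_pos_iff.2 s⁻¹.ne_zero
  have hκ : 1 ≤ ‖(s : A)‖ * ‖(↑s⁻¹ : A)‖ := by
    have := norm_mul_le (s : A) (↑s⁻¹ : A)
    rwa [Units.mul_inv, norm_one] at this
  set r : ℝ := Real.sqrt (‖(↑s⁻¹ : A)‖ / ‖(s : A)‖) with hr
  have hr0 : 0 < r := Real.sqrt_pos.2 (div_pos p2 p1)
  have hrr : r * r = ‖(↑s⁻¹ : A)‖ / ‖(s : A)‖ := Real.mul_self_sqrt (div_pos p2 p1).le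
  let t : Aˣ := ⟨r • (s : A), r⁻¹ • (↑s⁻¹ : A), by
    rw [smul_mul_smul_comm, mul_inv_cancel₀ hr0.ne', Units.mul_inv, one_smul], by
    rw [smul_mul_smul_comm, inv_mul_cancel₀ hr0.ne', Units.inv_mul, one_smul]⟩
  have ht : (t : A) = r • (s : A) := rfl
  have hti : (↑t⁻¹ : A) = r⁻¹ • (↑s⁻¹ : A) := rfl
  refine ⟨(t : A) * star (t : A), aux_fixed_of_unitarizer H t fun h hh => ?_,
    aux_clog_le t hκ ?_ ?_⟩
  · rw [ht, hti, smul_mul_assoc, smul_mul_smul_comm, inv_mul_cancel₀ hr0.ne', one_smul]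
    exact hs h hh
  · rw [ht, norm_smul, Real.norm_eq_abs, abs_of_pos hr0]
    apply le_of_eq
    calc _ = (r * r) * ‖(s : A)‖ * ‖(s : A)‖ := by ring
      _ = _ := by rw [hrr]; field_simp
  · rw [hti, norm_smul, Real.norm_eq_abs, abs_of_pos (inv_pos.2 hr0)]
    apply le_of_eq
    calc _ = (r * r)⁻¹ * ‖(↑s⁻¹ : A)‖ * ‖(↑s⁻¹ : A)‖ := by rw [mul_inv]; ring
      _ = _ := by rw [hrr]; field_simp

end aux

/-- `dist(O_H(1), P^H) = dist(1, P^H) = log (Sim H)` for a unitarizable group `H`. -/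
theorem stmt5 {A : Type*} [CStarAlgebra A] (H : Subgroup Aˣ)
    (hH : ∃ s : Aˣ, ∀ h ∈ H, (↑s⁻¹ : A) * (h : A) * (s : A) ∈ unitary A) :
    distSets (orbitOne H) (fixedSet H) = distSet 1 (fixedSet H) ∧
      distSet 1 (fixedSet H) = Real.log (simNum H) := by
  obtain ⟨s₀, hs₀⟩ := hH
  constructor
  · unfold distSets distSet
    congr 1
    ext r
    constructor
    · rintro ⟨x, ⟨h, hh, rfl⟩, y, hy, rfl⟩
      exact ⟨y, hy, by rw [aux_dd_orbit H hh hy, aux_dd_one]⟩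
    · rintro ⟨y, hy, rfl⟩
      exact ⟨1, ⟨1, H.one_mem, by simp⟩, y, hy, rfl⟩
  · have hne : {r : ℝ | ∃ c ∈ fixedSet H, r = dd 1 c}.Nonempty :=
      ⟨_, _, aux_fixed_of_unitarizer H s₀ hs₀, rfl⟩
    have hbd : BddBelow {r : ℝ | ∃ c ∈ fixedSet H, r = dd 1 c} :=
      ⟨0, by rintro _ ⟨c, -, rfl⟩; exact norm_nonneg _⟩
    have hne' : {c : ℝ | ∃ s : Aˣ, (∀ h ∈ H, (↑s⁻¹ : A) * (h : A) * (s : A) ∈ unitary A) ∧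
        c = ‖(s : A)‖ * ‖(↑s⁻¹ : A)‖}.Nonempty := ⟨_, s₀, hs₀, rfl⟩
    have hbd' : BddBelow {c : ℝ | ∃ s : Aˣ,
        (∀ h ∈ H, (↑s⁻¹ : A) * (h : A) * (s : A) ∈ unitary A) ∧
        c = ‖(s : A)‖ * ‖(↑s⁻¹ : A)‖} :=
      ⟨0, by rintro _ ⟨s, -, rfl⟩; positivity⟩
    rcases subsingleton_or_nontrivial A with hA | hA
    · have hz : ∀ x : A, ‖x‖ = 0 := fun x => by rw [Subsingleton.elim x 0, norm_zero]
      have e1 : distSet 1 (fixedSet H) = 0 := by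
        apply le_antisymm
        · exact csInf_le hbd ⟨_, aux_fixed_of_unitarizer H s₀ hs₀, (hz _).symm⟩
        · exact le_csInf hne (by rintro _ ⟨c, -, rfl⟩; exact norm_nonneg _)
      have e2 : simNum H = 0 := by
        apply le_antisymm
        · exact csInf_le hbd' ⟨s₀, hs₀, by rw [hz, zero_mul]⟩
        · exact le_csInf hne' (by rintro _ ⟨s, -, rfl⟩; positivity)
      rw [e1, e2, Real.log_zero]
    · have hexp : Real.exp (distSet 1 (fixedSet H)) ≤ simNum H := by
        apply le_csInf hne'
        rintro _ ⟨s, hs, rfl⟩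
        obtain ⟨a, ha, hle⟩ := aux_rescale H s hs
        have h1 : distSet 1 (fixedSet H) ≤ ‖clog a‖ := csInf_le hbd ⟨a, ha, (aux_dd_one a).symm⟩
        have hpos : 0 < ‖(s : A)‖ * ‖(↑s⁻¹ : A)‖ :=
          mul_pos (norm_pos_iff.2 s.ne_zero) (norm_pos_iff.2 s⁻¹.ne_zero)
        exact (Real.le_log_iff_exp_le hpos).1 (h1.trans hle)
      have hpos : 0 < simNum H := (Real.exp_pos _).trans_le hexp
      apply le_antisymm
      · exact (Real.le_log_iff_exp_le hpos).2 hexp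
      · apply le_csInf hne
        rintro _ ⟨a, ha, rfl⟩
        rw [aux_dd_one]
        obtain ⟨s, hs, hle⟩ := aux_unitarizer_of_fixed H ha
        exact (Real.log_le_iff_le_exp hpos).2 ((csInf_le hbd' ⟨s, hs, rfl⟩).trans hle)
end

section
/- Let A be a unital complex C*-algebra and H a subgroup of Aˣ which is uniformly bounded, i.e. |H| = sup_{h∈H} ‖h‖ < ∞. Then the diameter of the orbit O_H(1) = {h h* : h ∈ H} with respect to the metric d(a,b) = ‖log(a^{-1/2} b a^{-1/2})‖ equals 2·log(|H|): sup{ d(a,b) : a, b ∈ O_H(1) } = 2·log(sup_{h∈H} ‖h‖). -/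
theorem spec_pos {A : Type*} [CStarAlgebra A] (z : Aˣ) :
    ∀ t ∈ spectrum ℝ ((z : A) * star (z : A)), 0 < t := by
  intro t ht
  let _ := CStarAlgebra.spectralOrder A
  have := CStarAlgebra.spectralOrderedRing A
  have h0 : 0 ≤ t := spectrum_nonneg_of_nonneg (mul_star_self_nonneg (z : A)) ht
  rcases h0.lt_or_eq with h | h
  · exact h
  · exfalso
    subst h
    exact (spectrum.zero_notMem_iff ℝ).2 (z * star z).isUnit ht

theorem clog_upper {A : Type*} [CStarAlgebra A] [Nontrivial A] (z : Aˣ) (M : ℝ) (hM : 1 ≤ M)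
    (h1 : ‖(z : A)‖ ≤ M) (h2 : ‖(↑z⁻¹ : A)‖ ≤ M) :
    ‖clog ((z : A) * star (z : A))‖ ≤ 2 * Real.log M := by
  have hl : 0 ≤ 2 * Real.log M := by
    have := Real.log_nonneg hM
    positivity
  have h2l : 2 * Real.log M = Real.log (M * M) := by
    rw [Real.log_mul (by positivity) (by positivity)]; ring
  refine norm_cfc_le hl fun t ht => ?_
  have tp := spec_pos z t ht
  have ht1 : t ≤ M * M := by
    have := spectrum.norm_le_norm_of_mem ht
    rw [CStarRing.norm_self_mul_star, Real.norm_eq_abs, abs_of_pos tp] at this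
    exact this.trans (by gcongr)
  have ht2 : t⁻¹ ≤ M * M := by
    have hu : (z : A) * star (z : A) = ((z * star z : Aˣ) : A) := by simp
    rw [hu] at ht
    have h3 : t⁻¹ ∈ spectrum ℝ (((z * star z)⁻¹ : Aˣ) : A) := by
      have := (spectrum.inv_mem_iff (r := Units.mk0 t tp.ne') (a := z * star z)).1 ht
      simpa using this
    have := spectrum.norm_le_norm_of_mem h3
    rw [Real.norm_eq_abs, abs_of_pos (inv_pos.2 tp)] at this
    refine this.trans ?_
    have : (((z * star z)⁻¹ : Aˣ) : A) = star (↑z⁻¹ : A) * (↑z⁻¹ : A) := by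
      rw [mul_inv_rev]; simp
    rw [this, CStarRing.norm_star_mul_self]
    gcongr
  rw [Real.norm_eq_abs, abs_le, h2l]
  constructor
  · have := Real.log_le_log (inv_pos.2 tp) ht2
    rw [Real.log_inv] at this
    linarith
  · exact Real.log_le_log tp ht1

theorem clog_lower {A : Type*} [CStarAlgebra A] [Nontrivial A] (z : Aˣ) :
    2 * Real.log ‖(z : A)‖ ≤ ‖clog ((z : A) * star (z : A))‖ := by
  let _ := CStarAlgebra.spectralOrder A
  have := CStarAlgebra.spectralOrderedRing A
  have hm := CStarAlgebra.norm_mem_spectrum_of_nonneg (mul_star_self_nonneg (z : A))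
  have hz : 0 < ‖(z : A)‖ := norm_pos_iff.2 z.ne_zero
  have := norm_apply_le_norm_cfc (𝕜 := ℝ) Real.log ((z : A) * star (z : A)) hm
    (Real.continuousOn_log.mono fun t ht => (spec_pos z t ht).ne')
    (IsSelfAdjoint.mul_star_self _)
  have e : Real.log ‖(z : A) * star (z : A)‖ = 2 * Real.log ‖(z : A)‖ := by
    rw [CStarRing.norm_self_mul_star, Real.log_mul hz.ne' hz.ne']; ring
  have h2 := (Real.le_norm_self _).trans this
  unfold clog
  linarith [e]

theorem dd_eq {A : Type*} [CStarAlgebra A] (h k : Aˣ) :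
    ∃ z : Aˣ, dd ((h : A) * star (h : A)) ((k : A) * star (k : A)) =
      ‖clog ((z : A) * star (z : A))‖ ∧ ‖(z : A)‖ = ‖((h⁻¹ * k : Aˣ) : A)‖ ∧
      ‖(↑z⁻¹ : A)‖ = ‖((k⁻¹ * h : Aˣ) : A)‖ := by
  set x : A := (h : A) * star (h : A) with hx
  set p : A := cpow x (-(1/2)) with hp
  have hxs : IsSelfAdjoint x := IsSelfAdjoint.mul_star_self _
  have hps : star p = p := (cfc_predicate (p := IsSelfAdjoint) (fun t : ℝ => t ^ (-(1/2) : ℝ)) x).star_eq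
  have hc : ContinuousOn (fun t : ℝ => t ^ (-(1/2) : ℝ)) (spectrum ℝ x) := fun t ht =>
    (Real.continuousAt_rpow_const _ _ (Or.inl (spec_pos h t ht).ne')).continuousWithinAt
  have h1 : p * x * p = 1 := by
    have e1 : p * x = cfc (fun t : ℝ => t ^ (-(1/2) : ℝ) * t) x := by
      rw [cfc_mul (fun t : ℝ => t ^ (-(1/2) : ℝ)) (fun t => t) x hc continuousOn_id, cfc_id' ℝ x]; rfl
    rw [e1, hp, cpow, ← cfc_mul (fun t : ℝ => t ^ (-(1/2) : ℝ) * t) (fun t : ℝ => t ^ (-(1/2) : ℝ)) x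
      (hc.mul continuousOn_id) hc, ← cfc_one ℝ x]
    refine cfc_congr fun t ht => ?_
    have tp := spec_pos h t ht
    have : t ^ (-(1/2) : ℝ) * t * t ^ (-(1/2) : ℝ) = t ^ (-(1/2) : ℝ) * t ^ (1:ℝ) * t ^ (-(1/2) : ℝ) := by
      rw [Real.rpow_one]
    simp only [Pi.one_apply]
    rw [this, ← Real.rpow_add tp, ← Real.rpow_add tp]
    norm_num
  -- `u = p h` is unitary
  have hxu : x = ((h * star h : Aˣ) : A) := by simp [hx]
  have hr : (p * (h : A)) * star (p * (h : A)) = 1 := by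
    rw [star_mul, hps, ← h1, hx]; noncomm_ring
  have hpx : IsUnit p := by
    have hcomm : x * p = p * x := by
      have : Commute (cfc (fun t : ℝ => t ^ (-(1/2) : ℝ)) x) x := by
        have := cfc_commute_cfc (fun t : ℝ => t ^ (-(1/2) : ℝ)) (fun t : ℝ => t) x
        rwa [cfc_id' ℝ x] at this
      exact this.eq.symm
    refine ⟨⟨p, x * p, by rw [← mul_assoc, h1], ?_⟩, rfl⟩
    rw [hcomm, h1]
  obtain ⟨P, hP⟩ := hpx
  have hr' : star (p * (h : A)) * (p * (h : A)) = 1 := by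
    have : IsUnit (p * (h : A)) := by rw [← hP]; exact (P * h).isUnit
    obtain ⟨v, hv⟩ := this
    rw [← hv] at hr ⊢
    have : star (v : A) = ↑v⁻¹ := by
      rw [← Units.inv_mul_cancel_left v (star (v : A)), hr, mul_one]
    rw [this, Units.inv_mul]
  have hu : p * (h : A) ∈ unitary A := Unitary.mem_iff.2 ⟨hr', hr⟩
  refine ⟨P * k, ?_, ?_, ?_⟩
  · unfold dd
    rw [← hp, Units.val_mul, hP, star_mul, hps]
    congr 2
    noncomm_ring
  · have : ((P * k : Aˣ) : A) = (p * (h : A)) * ((h⁻¹ * k : Aˣ) : A) := by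
      rw [← hP, ← Units.val_mul, ← Units.val_mul]; congr 1; group
    rw [this]
    exact CStarRing.norm_mem_unitary_mul _ hu
  · have e : ((k⁻¹ * h : Aˣ) : A) = (↑(P * k)⁻¹ : A) * (p * (h : A)) := by
      rw [← hP, ← Units.val_mul, ← Units.val_mul]; congr 1; group
    rw [e]
    exact (CStarRing.norm_mul_mem_unitary _ hu).symm

/-- The diameter of the orbit `O_H(1)` equals `2 log |H|` for a uniformly bounded
group `H`. -/
theorem stmt6 {A : Type*} [CStarAlgebra A] (H : Subgroup Aˣ)
    (hbdd : BddAbove (normSet H)) :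
    sSup {r : ℝ | ∃ x ∈ orbitOne H, ∃ y ∈ orbitOne H, r = dd x y} =
      2 * Real.log (sSup (normSet H)) := by
  rcases subsingleton_or_nontrivial A with hA | hA
  · have n0 : ∀ a : A, ‖a‖ = 0 := fun a => by rw [Subsingleton.elim a 0, norm_zero]
    have e1 : {r : ℝ | ∃ x ∈ orbitOne H, ∃ y ∈ orbitOne H, r = dd x y} = {0} := by
      ext r
      constructor
      · rintro ⟨x, -, y, -, rfl⟩
        exact n0 _
      · rintro rfl
        exact ⟨_, ⟨1, H.one_mem, rfl⟩, _, ⟨1, H.one_mem, rfl⟩, (n0 _).symm⟩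
    have e2 : normSet H = {0} := by
      ext r
      constructor
      · rintro ⟨x, -, rfl⟩
        exact n0 _
      · rintro rfl
        exact ⟨1, H.one_mem, (n0 _).symm⟩
    rw [e1, e2]; simp
  · set M := sSup (normSet H) with hMdef
    have hle : ∀ h ∈ H, ‖(h : A)‖ ≤ M := fun h hh => le_csSup hbdd ⟨h, hh, rfl⟩
    have hM : 1 ≤ M := by simpa using hle 1 H.one_mem
    have hub : ∀ r ∈ {r : ℝ | ∃ x ∈ orbitOne H, ∃ y ∈ orbitOne H, r = dd x y},
        r ≤ 2 * Real.log M := by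
      rintro r ⟨_, ⟨h, hh, rfl⟩, _, ⟨k, hk, rfl⟩, rfl⟩
      obtain ⟨z, e, e1, e2⟩ := dd_eq h k
      rw [e]
      refine clog_upper z M hM ?_ ?_
      · rw [e1]; exact hle _ (H.mul_mem (H.inv_mem hh) hk)
      · rw [e2]; exact hle _ (H.mul_mem (H.inv_mem hk) hh)
    refine le_antisymm (csSup_le ?_ hub) ?_
    · exact ⟨_, _, ⟨1, H.one_mem, rfl⟩, _, ⟨1, H.one_mem, rfl⟩, rfl⟩
    · set D := sSup {r : ℝ | ∃ x ∈ orbitOne H, ∃ y ∈ orbitOne H, r = dd x y} with hD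
      have hk : ∀ k ∈ H, 2 * Real.log ‖(k : A)‖ ≤ D := by
        intro k hk
        obtain ⟨z, e, e1, e2⟩ := dd_eq 1 k
        have h3 := clog_lower z
        rw [← e, e1, inv_one, one_mul] at h3
        exact h3.trans (le_csSup ⟨_, hub⟩ ⟨_, ⟨1, H.one_mem, rfl⟩, _, ⟨k, hk, rfl⟩, rfl⟩)
      have hME : M ≤ Real.exp (D / 2) := by
        refine csSup_le ⟨_, 1, H.one_mem, rfl⟩ ?_
        rintro r ⟨k, hkH, rfl⟩
        have hz : 0 < ‖(k : A)‖ := norm_pos_iff.2 k.ne_zero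
        rw [← Real.log_le_iff_le_exp hz]
        linarith [hk k hkH]
      rw [← Real.log_le_iff_le_exp (by positivity)] at hME
      linarith
end

section
/- Let ℋ be a separable complex Hilbert space, A ⊆ B(ℋ) a von Neumann algebra, and H a subgroup of the invertible elements of A. Assume the fixed point set P^H ∩ A = {a ∈ A : a positive invertible, h a h* = a for all h ∈ H} is nonempty. Then for every positive invertible b ∈ A there exists a ∈ P^H ∩ A such that d(b,a) = dist(b, P^H ∩ A), i.e. the distance from b to the fixed point set is attained, where d(x,y) = ‖log(x^{-1/2} y x^{-1/2})‖. -/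
open scoped InnerProductSpace
open Filter Topology

theorem aux_isPosInv_iff {E : Type*} [NormedAddCommGroup E] [InnerProductSpace ℂ E]
    [CompleteSpace E] (a : E →L[ℂ] E) : IsPosInv a ↔ IsStrictlyPositive a := by
  constructor
  · rintro ⟨h1, h2⟩
    exact (StarOrderedRing.isStrictlyPositive_iff_spectrum_pos (R := ℝ) a h1).mpr
      fun x hx => h2 hx
  · intro h
    have h1 : IsSelfAdjoint a := h.isSelfAdjoint
    exact ⟨h1, fun x hx =>
      (StarOrderedRing.isStrictlyPositive_iff_spectrum_pos (R := ℝ) a h1).mp h x hx⟩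

theorem aux_cpow_cont {E : Type*} [NormedAddCommGroup E] [InnerProductSpace ℂ E]
    [CompleteSpace E] (b : E →L[ℂ] E) (hb : IsPosInv b) (t : ℝ) :
    ContinuousOn (fun x : ℝ => x ^ t) (spectrum ℝ b) := by
  intro x hx
  exact (Real.continuousAt_rpow_const x t (Or.inl (ne_of_gt (hb.2 hx)))).continuousWithinAt

theorem aux_cpow_add {E : Type*} [NormedAddCommGroup E] [InnerProductSpace ℂ E]
    [CompleteSpace E] (b : E →L[ℂ] E) (hb : IsPosInv b) (s t : ℝ) :
    cpow b s * cpow b t = cpow b (s + t) := by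
  unfold cpow
  rw [← cfc_mul _ _ b (aux_cpow_cont b hb s) (aux_cpow_cont b hb t)]
  refine cfc_congr fun x hx => ?_
  exact (Real.rpow_add (hb.2 hx) s t).symm

theorem aux_cpow_one_s8 {E : Type*} [NormedAddCommGroup E] [InnerProductSpace ℂ E]
    [CompleteSpace E] (b : E →L[ℂ] E) (hb : IsPosInv b) : cpow b 1 = b := by
  unfold cpow
  simp only [Real.rpow_one]
  exact cfc_id' ℝ b hb.1

theorem aux_cpow_zero_s8 {E : Type*} [NormedAddCommGroup E] [InnerProductSpace ℂ E]
    [CompleteSpace E] (b : E →L[ℂ] E) (hb : IsPosInv b) : cpow b 0 = 1 := by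
  unfold cpow
  simp only [Real.rpow_zero]
  exact cfc_const_one ℝ b hb.1

theorem aux_dd_le_iff {E : Type*} [NormedAddCommGroup E] [InnerProductSpace ℂ E]
    [CompleteSpace E] (a b : E →L[ℂ] E) (ha : IsPosInv a) (hb : IsPosInv b)
    {r : ℝ} (hr : 0 ≤ r) :
    dd b a ≤ r ↔ Real.exp (-r) • b ≤ a ∧ a ≤ Real.exp r • b := by
  unfold dd
  set s := cpow b (-(1/2)) with hs
  set t := cpow b (1/2) with ht
  have hss : IsSelfAdjoint s := by rw [hs]; unfold cpow; exact cfc_predicate _ _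
  have hts : IsSelfAdjoint t := by rw [ht]; unfold cpow; exact cfc_predicate _ _
  have hst : s * t = 1 := by
    rw [hs, ht, aux_cpow_add b hb]; norm_num; exact aux_cpow_zero_s8 b hb
  have hts1 : t * s = 1 := by
    rw [hs, ht, aux_cpow_add b hb]; norm_num; exact aux_cpow_zero_s8 b hb
  have htt : t * t = b := by
    rw [ht, aux_cpow_add b hb]; norm_num; exact aux_cpow_one_s8 b hb
  have hsbs : s * b * s = 1 := by
    rw [← htt, ← mul_assoc, hst, one_mul, hts1]
  have hsu : IsUnit s := ⟨⟨s, t, hst, hts1⟩, rfl⟩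
  have hX : IsPosInv (s * a * s) := by
    rw [aux_isPosInv_iff] at ha ⊢
    exact ha.conjugate_of_isUnit_of_isSelfAdjoint a s hsu hss
  have back : ∀ c : E →L[ℂ] E, t * (s * c * s) * t = c := by
    intro c
    calc t * (s * c * s) * t = (t * s) * c * (s * t) := by simp only [mul_assoc]
      _ = c := by rw [hst, hts1]; simp
  have conj : ∀ c d : E →L[ℂ] E, s * c * s ≤ s * d * s ↔ c ≤ d := by
    intro c d
    constructor
    · intro h
      have := hts.conjugate_le_conjugate h
      rwa [back, back] at this
    · intro h
      exact hss.conjugate_le_conjugate h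
  have hal : ∀ k : ℝ, s * (k • b) * s = algebraMap ℝ (E →L[ℂ] E) k := by
    intro k
    rw [mul_smul_comm, smul_mul_assoc, hsbs, Algebra.algebraMap_eq_smul_one]
  rw [← conj _ a, ← conj a, hal, hal, algebraMap_le_iff_le_spectrum hX.1,
    le_algebraMap_iff_spectrum_le hX.1]
  unfold clog
  rw [norm_cfc_le_iff Real.log (s * a * s) hr
    (fun x hx => (Real.continuousAt_log (ne_of_gt (hX.2 hx))).continuousWithinAt) hX.1,
    ← forall₂_and]
  refine forall₂_congr fun x hx => ?_
  have hx0 : 0 < x := hX.2 hx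
  rw [Real.norm_eq_abs, abs_le, Real.le_log_iff_exp_le hx0, Real.log_le_iff_le_exp hx0]

theorem aux_limit {E : Type*} [NormedAddCommGroup E] [InnerProductSpace ℂ E]
    [CompleteSpace E] (u : ℕ → E →L[ℂ] E) (M : ℝ) (hM : ∀ n, ‖u n‖ ≤ M) (U : Ultrafilter ℕ) :
    ∃ a : E →L[ℂ] E, ∀ x y : E, Tendsto (fun n => ⟪u n x, y⟫_ℂ) U (𝓝 ⟪a x, y⟫_ℂ) := by
  have hbd : ∀ x y n, ‖⟪u n x, y⟫_ℂ‖ ≤ M * ‖x‖ * ‖y‖ := by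
    intro x y n
    refine (norm_inner_le_norm _ _).trans ?_
    gcongr
    exact (u n).le_of_opNorm_le (hM n) x
  have hex : ∀ x y : E, ∃ z : ℂ, ‖z‖ ≤ M * ‖x‖ * ‖y‖ ∧
      Tendsto (fun n => ⟪u n x, y⟫_ℂ) U (𝓝 z) := by
    intro x y
    have hc : IsCompact (Metric.closedBall (0 : ℂ) (M * ‖x‖ * ‖y‖)) := isCompact_closedBall _ _
    obtain ⟨z, hz, hz2⟩ := hc.ultrafilter_le_nhds (U.map fun n => ⟪u n x, y⟫_ℂ) (by
      rw [le_principal_iff]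
      refine Filter.mem_map.mpr (Filter.Eventually.of_forall fun n => ?_)
      simpa using hbd x y n)
    exact ⟨z, by simpa using hz, hz2⟩
  choose B hB hBl using hex
  let L : E →ₗ⋆[ℂ] E →ₗ[ℂ] ℂ := LinearMap.mk₂'ₛₗ (starRingEnd ℂ) (RingHom.id ℂ) B
    (fun x x' y => tendsto_nhds_unique (hBl _ _)
      (by simpa [inner_add_left] using (hBl x y).add (hBl x' y)))
    (fun c x y => tendsto_nhds_unique (hBl _ _)
      (by simpa [inner_smul_left, mul_comm] using (hBl x y).const_mul (starRingEnd ℂ c)))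
    (fun x y y' => tendsto_nhds_unique (hBl _ _)
      (by simpa [inner_add_right] using (hBl x y).add (hBl x y')))
    (fun c x y => tendsto_nhds_unique (hBl _ _)
      (by simpa [inner_smul_right] using (hBl x y).const_mul c))
  refine ⟨InnerProductSpace.continuousLinearMapOfBilin (L.mkContinuous₂ M hB), fun x y => ?_⟩
  rw [InnerProductSpace.continuousLinearMapOfBilin_apply]
  exact hBl x y

open scoped ComplexOrder in
theorem aux_le_of_limit {E : Type*} [NormedAddCommGroup E] [InnerProductSpace ℂ E]
    [CompleteSpace E] (u v : ℕ → E →L[ℂ] E) (U : Ultrafilter ℕ) (a c : E →L[ℂ] E)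
    (ha : ∀ x y : E, Tendsto (fun n => ⟪u n x, y⟫_ℂ) U (𝓝 ⟪a x, y⟫_ℂ))
    (hc : ∀ x y : E, Tendsto (fun n => ⟪v n x, y⟫_ℂ) U (𝓝 ⟪c x, y⟫_ℂ))
    (h : ∀ᶠ n in (U : Filter ℕ), u n ≤ v n) : a ≤ c := by
  rw [ContinuousLinearMap.le_def, ContinuousLinearMap.isPositive_iff_complex]
  have hd : ∀ x, Tendsto (fun n => ⟪(v n - u n) x, x⟫_ℂ) U (𝓝 ⟪(c - a) x, x⟫_ℂ) := by
    intro x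
    simpa [inner_sub_left] using (hc x x).sub (ha x x)
  intro x
  have h2 : 0 ≤ ⟪(c - a) x, x⟫_ℂ := by
    refine ge_of_tendsto (hd x) (h.mono fun n hn => ?_)
    rw [ContinuousLinearMap.le_def] at hn
    exact hn.inner_nonneg_left x
  have h3 := Complex.nonneg_iff.mp h2
  refine ⟨Complex.ext (by simp) (by exact (Complex.ofReal_im _).trans h3.2), h3.1⟩

/-- In a von Neumann algebra on a separable Hilbert space, the distance from a
positive invertible `b` to a nonempty fixed point set `P^H ∩ A` is attained. -/
theorem stmt8 {E : Type*} [NormedAddCommGroup E] [InnerProductSpace ℂ E] [CompleteSpace E]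
    [TopologicalSpace.SeparableSpace E] (A : VonNeumannAlgebra E)
    (H : Subgroup (E →L[ℂ] E)ˣ)
    (hHA : ∀ h ∈ H, ((h : (E →L[ℂ] E)ˣ) : E →L[ℂ] E) ∈ A)
    (hne : Set.Nonempty {a : E →L[ℂ] E | a ∈ A ∧ IsPosInv a ∧
      ∀ h ∈ H, (h : E →L[ℂ] E) * a * star (h : E →L[ℂ] E) = a})
    (b : E →L[ℂ] E) (hbA : b ∈ A) (hb : IsPosInv b) :
    ∃ a ∈ {a : E →L[ℂ] E | a ∈ A ∧ IsPosInv a ∧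
        ∀ h ∈ H, (h : E →L[ℂ] E) * a * star (h : E →L[ℂ] E) = a},
      dd b a = distSet b {a : E →L[ℂ] E | a ∈ A ∧ IsPosInv a ∧
        ∀ h ∈ H, (h : E →L[ℂ] E) * a * star (h : E →L[ℂ] E) = a} := by
  set C := {a : E →L[ℂ] E | a ∈ A ∧ IsPosInv a ∧
        ∀ h ∈ H, (h : E →L[ℂ] E) * a * star (h : E →L[ℂ] E) = a} with hC
  set S := {r : ℝ | ∃ c ∈ C, r = dd b c} with hS
  have hSne : S.Nonempty := by
    obtain ⟨c, hc⟩ := hne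
    exact ⟨dd b c, c, hc, rfl⟩
  have hS0 : ∀ r ∈ S, 0 ≤ r := by
    rintro r ⟨c, hc, rfl⟩
    exact norm_nonneg _
  have hSb : BddBelow S := ⟨0, hS0⟩
  have hD : distSet b C = sInf S := rfl
  rw [hD]
  have hD0 : 0 ≤ sInf S := Real.sInf_nonneg hS0
  have hseq : ∀ n : ℕ, ∃ c ∈ C, dd b c < sInf S + 1 / ((n : ℝ) + 1) := by
    intro n
    obtain ⟨r, ⟨c, hc, rfl⟩, hlt⟩ := exists_lt_of_csInf_lt hSne
      (show sInf S < sInf S + 1 / ((n : ℝ) + 1) by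
        have : (0 : ℝ) < 1 / ((n : ℝ) + 1) := by positivity
        linarith)
    exact ⟨c, hc, hlt⟩
  choose u hu hud using hseq
  have hbpos : IsStrictlyPositive b := (aux_isPosInv_iff b).mp hb
  have hupos : ∀ n, IsStrictlyPositive (u n) := fun n => (aux_isPosInv_iff _).mp (hu n).2.1
  have key : ∀ n : ℕ, ∀ r, sInf S + 1 / ((n : ℝ) + 1) ≤ r →
      Real.exp (-r) • b ≤ u n ∧ u n ≤ Real.exp r • b := by
    intro n r hr
    have : (0 : ℝ) < 1 / ((n : ℝ) + 1) := by positivity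
    exact (aux_dd_le_iff (u n) b (hu n).2.1 hb (by linarith)).mp ((hud n).le.trans hr)
  obtain ⟨a, ha⟩ := aux_limit u ‖Real.exp (sInf S + 1) • b‖ (fun n => by
    refine CStarAlgebra.norm_le_norm_of_nonneg_of_le (hupos n).nonneg (key n _ ?_).2
    have : 1 / ((n : ℝ) + 1) ≤ 1 := by
      rw [div_le_one (by positivity)]
      have : (0 : ℝ) ≤ n := n.cast_nonneg
      linarith
    linarith) (hyperfilter ℕ)
  have hbd : ∀ r, sInf S < r → Real.exp (-r) • b ≤ a ∧ a ≤ Real.exp r • b := by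
    intro r hr
    have hev : ∀ᶠ n : ℕ in (hyperfilter ℕ : Filter ℕ), sInf S + 1 / ((n : ℝ) + 1) ≤ r := by
      refine Filter.Eventually.filter_mono Nat.hyperfilter_le_atTop ?_
      have h1 : Tendsto (fun n : ℕ => sInf S + 1 / ((n : ℝ) + 1)) atTop (𝓝 (sInf S + 0)) :=
        tendsto_const_nhds.add tendsto_one_div_add_atTop_nhds_zero_nat
      rw [add_zero] at h1
      exact (h1.eventually_lt_const hr).mono fun n hn => hn.le
    constructor
    · exact aux_le_of_limit (fun _ => Real.exp (-r) • b) u (hyperfilter ℕ) _ _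
        (fun x y => tendsto_const_nhds) ha (hev.mono fun n hn => (key n r hn).1)
    · exact aux_le_of_limit u (fun _ => Real.exp r • b) (hyperfilter ℕ) _ _
        ha (fun x y => tendsto_const_nhds) (hev.mono fun n hn => (key n r hn).2)
  have hapos : IsPosInv a := by
    rw [aux_isPosInv_iff]
    exact IsStrictlyPositive.of_le (hbpos.smul (Real.exp_pos _))
      (hbd (sInf S + 1) (by linarith)).1
  have haC : a ∈ C := by
    refine ⟨?_, hapos, ?_⟩
    · rw [← VonNeumannAlgebra.commutant_commutant A, VonNeumannAlgebra.mem_commutant_iff]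
      intro g hg
      rw [VonNeumannAlgebra.mem_commutant_iff] at hg
      ext x
      refine ext_inner_right ℂ fun y => ?_
      have h1 : Tendsto (fun n => ⟪u n x, star g y⟫_ℂ) (hyperfilter ℕ) (𝓝 ⟪a x, star g y⟫_ℂ) :=
        ha _ _
      have h2 := ha (g x) y
      rw [ContinuousLinearMap.star_eq_adjoint] at h1
      simp only [ContinuousLinearMap.adjoint_inner_right] at h1
      refine tendsto_nhds_unique h1 (h2.congr fun n => ?_)
      have := DFunLike.congr_fun (hg (u n) (hu n).1) x
      simp only [mul_apply_eq_comp] at this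
      rw [this]
    · intro h hh
      ext x
      refine ext_inner_right ℂ fun y => ?_
      have h1 := ha (star (h : E →L[ℂ] E) x) (star (h : E →L[ℂ] E) y)
      have h2 := ha x y
      rw [ContinuousLinearMap.star_eq_adjoint] at h1
      simp only [ContinuousLinearMap.adjoint_inner_right] at h1
      refine tendsto_nhds_unique h1 (h2.congr fun n => ?_)
      have := DFunLike.congr_fun ((hu n).2.2 h hh) x
      simp only [mul_apply_eq_comp, ContinuousLinearMap.star_eq_adjoint] at this
      rw [this]
  refine ⟨a, haC, le_antisymm ?_ (csInf_le hSb ⟨a, haC, rfl⟩)⟩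
  refine le_of_forall_gt_imp_ge_of_dense fun r hr => ?_
  exact (aux_dd_le_iff a b hapos hb (by linarith)).mpr (hbd r hr)
end

section
/- Let A be a unital complex C*-algebra and C a nonempty geodesically convex subset of the set P of positive invertible elements of A (i.e. γ_{x,y}(t) ∈ C for all x,y ∈ C and t ∈ [0,1]). Then the function a ↦ dist(a, C) = inf_{c∈C} d(a,c) is geodesically convex: for all a,b ∈ P and t ∈ [0,1], dist(γ_{a,b}(t), C) ≤ (1−t)·dist(a,C) + t·dist(b,C), where d(x,y) = ‖log(x^{-1/2} y x^{-1/2})‖ and γ_{a,b}(t) = a^{1/2}(a^{-1/2} b a^{-1/2})^t a^{1/2}. -/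
namespace Stmt11Aux

section
variable {A : Type*} [CStarAlgebra A] [PartialOrder A] [StarOrderedRing A]

lemma isPosInv_iff {a : A} : IsPosInv a ↔ IsStrictlyPositive a := by
  rw [CStarAlgebra.isStrictlyPositive_iff_isSelfAdjoint_and_spectrum_pos]
  rfl

lemma cpow_eq {a : A} (ha : IsStrictlyPositive a) (t : ℝ) : cpow a t = a ^ t :=
  (CFC.rpow_eq_cfc_real ha.nonneg).symm

lemma sa_rpow (a : A) (t : ℝ) : IsSelfAdjoint (a ^ t) :=
  IsSelfAdjoint.of_nonneg CFC.rpow_nonneg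

/-- Conjugating a strictly positive element by a real power of a strictly positive one. -/
lemma conj_sp {a b : A} (ha : IsStrictlyPositive a) (hb : IsStrictlyPositive b) (s : ℝ) :
    IsStrictlyPositive (a ^ s * b * a ^ s) := by
  obtain ⟨x, hx, rfl⟩ := CStarAlgebra.isStrictlyPositive_iff_eq_mul_star_self.1 hb
  refine CStarAlgebra.isStrictlyPositive_iff_eq_mul_star_self.2 ⟨a ^ s * x, ?_, ?_⟩
  · exact (ha.rpow a s).isUnit.mul hx
  · rw [star_mul, (sa_rpow a s).star_eq]
    simp only [mul_assoc]

/-- Geometric-mean curve with Mathlib powers. -/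
lemma geo_eq {a b : A} (ha : IsStrictlyPositive a) (hb : IsStrictlyPositive b) (t : ℝ) :
    geo a b t = a ^ (1 / 2 : ℝ) * (a ^ (-(1 / 2) : ℝ) * b * a ^ (-(1 / 2) : ℝ)) ^ t
      * a ^ (1 / 2 : ℝ) := by
  unfold geo
  rw [cpow_eq ha, cpow_eq ha, cpow_eq (conj_sp ha hb _)]

lemma geo_sp {a b : A} (ha : IsStrictlyPositive a) (hb : IsStrictlyPositive b) (t : ℝ) :
    IsStrictlyPositive (geo a b t) := by
  rw [geo_eq ha hb]
  exact conj_sp ha ((conj_sp ha hb _).rpow _ t) _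

/-- The polar decomposition identity `(x x*)^t = x (x* x)^(t-1) x*`. -/
lemma rpow_mul_star {x : A} (hx : IsUnit x) (t : ℝ) :
    (x * star x) ^ t = x * (star x * x) ^ (t - 1) * star x := by
  have hy : IsStrictlyPositive (star x * x) :=
    CStarAlgebra.isStrictlyPositive_iff_eq_star_mul_self.2 ⟨x, hx, rfl⟩
  have hz : IsStrictlyPositive (x * star x) :=
    CStarAlgebra.isStrictlyPositive_iff_eq_mul_star_self.2 ⟨x, hx, rfl⟩
  set y := star x * x with hydef
  set q := y ^ (-(1 / 2) : ℝ) with hq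
  have hqs : star q = q := (sa_rpow y _).star_eq
  have hqyq : q * y * q = 1 := CFC.conjugate_rpow_neg_one_half y hy
  have h1 : star (x * q) * (x * q) = 1 := by
    rw [star_mul, hqs, ← hqyq, hydef]; simp only [mul_assoc]
  have hu : IsUnit (x * q) := hx.mul (hy.rpow y _).isUnit
  have h2 : (x * q) * star (x * q) = 1 := by
    obtain ⟨v, hv⟩ := hu
    rw [← hv] at h1 ⊢
    have h3 : star (v : A) = ((v⁻¹ : Aˣ) : A) := by
      calc star (v : A) = star (v : A) * v * ((v⁻¹ : Aˣ) : A) := by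
            rw [mul_assoc, Units.mul_inv, mul_one]
        _ = _ := by rw [h1, one_mul]
    rw [h3, Units.mul_inv]
  let u : unitary A := ⟨x * q, Unitary.mem_iff.2 ⟨h1, h2⟩⟩
  let φ := Unitary.conjStarAlgAut ℝ A u
  have hφ : ∀ w, φ w = x * (q * w * q) * star x := by
    intro w
    rw [Unitary.conjStarAlgAut_apply]
    change x * q * w * star (x * q) = _
    rw [star_mul, hqs]; simp only [mul_assoc]
  have hφy : φ y = x * star x := by rw [hφ, hqyq, mul_one]
  have hcont : Continuous φ := by
    have : (φ : A → A) = fun w => x * (q * w * q) * star x := funext hφ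
    rw [this]; fun_prop
  have key : φ (y ^ t) = (x * star x) ^ t := by
    rw [CFC.rpow_eq_cfc_real hy.nonneg, CFC.rpow_eq_cfc_real hz.nonneg, ← hφy]
    have hpos := (CStarAlgebra.isStrictlyPositive_iff_isSelfAdjoint_and_spectrum_pos.1 hy).2
    refine StarAlgHomClass.map_cfc (S := ℝ) φ _ y ?_ hcont ?_ ?_
    · intro s hs
      exact (Real.continuousAt_rpow_const s t (Or.inl (hpos s hs).ne')).continuousWithinAt
    · exact hy.isSelfAdjoint
    · rw [hφy]; exact hz.isSelfAdjoint
  rw [← key, hφ, hq, ← CFC.rpow_add hy.isUnit, ← CFC.rpow_add hy.isUnit]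
  congr 3
  ring_nf

lemma geo_symm {a b : A} (ha : IsStrictlyPositive a) (hb : IsStrictlyPositive b) (t : ℝ) :
    geo a b t = geo b a (1 - t) := by
  rw [geo_eq ha hb, geo_eq hb ha]
  have hbb : b ^ (1 / 2 : ℝ) * b ^ (1 / 2 : ℝ) = b := by
    rw [← CFC.rpow_add hb.isUnit]; norm_num [CFC.rpow_one b hb.nonneg]
  have haa : a ^ (-(1 / 2) : ℝ) * a * a ^ (-(1 / 2) : ℝ) = 1 :=
    CFC.conjugate_rpow_neg_one_half a ha
  have ha1 : a ^ (1 / 2 : ℝ) * a ^ (-(1 / 2) : ℝ) = 1 := CFC.rpow_mul_rpow_neg _ ha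
  have ha2 : a ^ (-(1 / 2) : ℝ) * a ^ (1 / 2 : ℝ) = 1 := CFC.rpow_neg_mul_rpow _ ha
  have hb1 : b ^ (1 / 2 : ℝ) * b ^ (-(1 / 2) : ℝ) = 1 := CFC.rpow_mul_rpow_neg _ hb
  have hb2 : b ^ (-(1 / 2) : ℝ) * b ^ (1 / 2 : ℝ) = 1 := CFC.rpow_neg_mul_rpow _ hb
  have sA := (sa_rpow a (-(1 / 2))).star_eq
  have sB := (sa_rpow b (1 / 2)).star_eq
  have uA := (ha.rpow a (-(1 / 2))).isUnit
  have uB := (hb.rpow b (1 / 2)).isUnit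
  have hsp := conj_sp hb ha (-(1 / 2))
  set p := a ^ (1 / 2 : ℝ)
  set q := a ^ (-(1 / 2) : ℝ)
  set r := b ^ (1 / 2 : ℝ)
  set s := b ^ (-(1 / 2) : ℝ)
  have hw : IsUnit (q * r) := uA.mul uB
  have e1 : q * b * q = (q * r) * star (q * r) := by
    rw [star_mul, sA, sB]
    nth_rw 1 [← hbb]
    simp only [mul_assoc]
  have hv : IsStrictlyPositive (star (q * r) * (q * r)) :=
    CStarAlgebra.isStrictlyPositive_iff_eq_star_mul_self.2 ⟨_, hw, rfl⟩
  have e2 : s * a * s = (star (q * r) * (q * r)) ^ (-1 : ℝ) := by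
    rw [← CFC.inverse_eq_rpow_neg_one hv]
    symm
    have qaq' : a * q * q = 1 := by
      have : p * (q * a * q) * q = p * q := by rw [haa, mul_one]
      rw [ha1] at this
      rw [← this]
      simp only [← mul_assoc]; rw [ha1, one_mul]
    have hm : s * a * s * (star (q * r) * (q * r)) = 1 := by
      rw [star_mul, sA, sB]
      calc s * a * s * (r * q * (q * r)) = s * (a * (s * r) * q * q) * r := by
            simp only [mul_assoc]
        _ = 1 := by rw [hb2, mul_one, qaq', mul_one, hb2]
    calc Ring.inverse (star (q * r) * (q * r))
        = s * a * s * (star (q * r) * (q * r)) * Ring.inverse (star (q * r) * (q * r)) := by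
          rw [hm, one_mul]
      _ = s * a * s := by rw [mul_assoc, Ring.mul_inverse_cancel _ hv.isUnit, mul_one]
  rw [e1, rpow_mul_star hw, e2, CFC.rpow_rpow _ _ _ (by norm_num) hv, star_mul, sA, sB]
  have : p * (q * r * (r * q * (q * r)) ^ (t - 1) * (r * q)) * p
      = (p * q) * (r * (r * q * (q * r)) ^ (t - 1) * r) * (q * p) := by
    simp only [mul_assoc]
  rw [this, ha1, ha2, one_mul, mul_one]
  congr 3
  ring

lemma geo_mono_right {a b c : A} (ha : IsStrictlyPositive a) (hb : IsStrictlyPositive b)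
    (hc : IsStrictlyPositive c) {m t : ℝ} (hm : 0 < m) (ht : t ∈ Set.Icc (0 : ℝ) 1)
    (h : c ≤ m • b) : geo a c t ≤ m ^ t • geo a b t := by
  rw [geo_eq ha hb, geo_eq ha hc]
  have hz := conj_sp ha hb (-(1 / 2))
  have h1 : a ^ (-(1 / 2) : ℝ) * c * a ^ (-(1 / 2) : ℝ)
      ≤ m • (a ^ (-(1 / 2) : ℝ) * b * a ^ (-(1 / 2) : ℝ)) := by
    have := IsSelfAdjoint.conjugate_le_conjugate h (sa_rpow a (-(1 / 2)))
    simpa only [mul_smul_comm, smul_mul_assoc] using this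
  have h2 := CFC.rpow_le_rpow ht h1
  set z := a ^ (-(1 / 2) : ℝ) * b * a ^ (-(1 / 2) : ℝ)
  have h3 : (m • z) ^ t = m ^ t • z ^ t := by
    have hmz : IsStrictlyPositive (m • z) := hz.smul hm
    have hpos := (CStarAlgebra.isStrictlyPositive_iff_isSelfAdjoint_and_spectrum_pos.1 hz).2
    rw [CFC.rpow_eq_cfc_real hmz.nonneg, CFC.rpow_eq_cfc_real hz.nonneg,
      ← cfc_comp_smul m _ z ?_ hz.isSelfAdjoint, ← cfc_smul (m ^ t) _ z ?_]
    · refine cfc_congr fun s hs => ?_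
      exact Real.mul_rpow hm.le (hpos s hs).le
    · exact fun s hs =>
        (Real.continuousAt_rpow_const s t (Or.inl (hpos s hs).ne')).continuousWithinAt
    · rintro _ ⟨s, hs, rfl⟩
      exact (Real.continuousAt_rpow_const _ t
        (Or.inl (mul_pos hm (hpos s hs)).ne')).continuousWithinAt
  rw [h3] at h2
  have := IsSelfAdjoint.conjugate_le_conjugate h2 (sa_rpow a (1 / 2))
  simpa only [mul_smul_comm, smul_mul_assoc] using this

lemma geo_mono {a b c e : A} (ha : IsStrictlyPositive a) (hb : IsStrictlyPositive b)
    (hc : IsStrictlyPositive c) (he : IsStrictlyPositive e) {r s t : ℝ}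
    (ht : t ∈ Set.Icc (0 : ℝ) 1)
    (h1 : c ≤ Real.exp r • a) (h2 : e ≤ Real.exp s • b) :
    geo c e t ≤ Real.exp ((1 - t) * r + t * s) • geo a b t := by
  have i1 := geo_mono_right hc hb he (Real.exp_pos s) ht h2
  have ht' : 1 - t ∈ Set.Icc (0 : ℝ) 1 := ⟨by linarith [ht.2], by linarith [ht.1]⟩
  have i2 := geo_mono_right hb ha hc (Real.exp_pos r) ht' h1
  rw [← geo_symm hc hb, ← geo_symm ha hb] at i2
  have i3 := smul_le_smul_of_nonneg_left i2 (Real.rpow_pos_of_pos (Real.exp_pos s) t).le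
  refine (i1.trans i3).trans_eq ?_
  rw [smul_smul, ← Real.exp_mul, ← Real.exp_mul, ← Real.exp_add]
  congr 2
  ring

lemma dd_le_iff {x y : A} (hx : IsStrictlyPositive x) (hy : IsStrictlyPositive y) {r : ℝ}
    (hr : 0 ≤ r) : dd x y ≤ r ↔ y ≤ Real.exp r • x ∧ x ≤ Real.exp r • y := by
  unfold dd clog
  rw [cpow_eq hx]
  have hz := conj_sp hx hy (-(1 / 2))
  have hx1 : x ^ (1 / 2 : ℝ) * x ^ (-(1 / 2) : ℝ) = 1 := CFC.rpow_mul_rpow_neg _ hx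
  have hx2 : x ^ (-(1 / 2) : ℝ) * x ^ (1 / 2 : ℝ) = 1 := CFC.rpow_neg_mul_rpow _ hx
  have hxx : x ^ (1 / 2 : ℝ) * x ^ (1 / 2 : ℝ) = x := by
    rw [← CFC.rpow_add hx.isUnit]; norm_num [CFC.rpow_one x hx.nonneg]
  have hxn : x ^ (-(1 / 2) : ℝ) * x * x ^ (-(1 / 2) : ℝ) = 1 :=
    CFC.conjugate_rpow_neg_one_half x hx
  have sp := sa_rpow x (1 / 2)
  have sq := sa_rpow x (-(1 / 2))
  set p := x ^ (1 / 2 : ℝ)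
  set q := x ^ (-(1 / 2) : ℝ)
  have hpz : p * (q * y * q) * p = y := by
    have : p * (q * y * q) * p = (p * q) * y * (q * p) := by simp only [mul_assoc]
    rw [this, hx1, hx2, one_mul, mul_one]
  have hpos := (CStarAlgebra.isStrictlyPositive_iff_isSelfAdjoint_and_spectrum_pos.1 hz).2
  have E1 : y ≤ Real.exp r • x ↔ q * y * q ≤ algebraMap ℝ A (Real.exp r) := by
    rw [Algebra.algebraMap_eq_smul_one]
    constructor
    · intro h
      have := IsSelfAdjoint.conjugate_le_conjugate h sq
      rwa [mul_smul_comm, smul_mul_assoc, hxn] at this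
    · intro h
      have := IsSelfAdjoint.conjugate_le_conjugate h sp
      rwa [mul_smul_comm, smul_mul_assoc, mul_one, hxx, hpz] at this
  have E2 : x ≤ Real.exp r • y ↔ algebraMap ℝ A (Real.exp (-r)) ≤ q * y * q := by
    rw [Algebra.algebraMap_eq_smul_one]
    constructor
    · intro h
      have := IsSelfAdjoint.conjugate_le_conjugate h sq
      rw [mul_smul_comm, smul_mul_assoc, hxn] at this
      have := smul_le_smul_of_nonneg_left this (Real.exp_pos (-r)).le
      rwa [smul_smul, ← Real.exp_add, neg_add_cancel, Real.exp_zero, one_smul] at this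
    · intro h
      have := IsSelfAdjoint.conjugate_le_conjugate h sp
      rw [mul_smul_comm, smul_mul_assoc, mul_one, hxx, hpz] at this
      have := smul_le_smul_of_nonneg_left this (Real.exp_pos r).le
      rwa [smul_smul, ← Real.exp_add, add_neg_cancel, Real.exp_zero, one_smul] at this
  rw [E1, E2, le_algebraMap_iff_spectrum_le hz.isSelfAdjoint,
    algebraMap_le_iff_le_spectrum hz.isSelfAdjoint, norm_cfc_le_iff Real.log _ hr
      (fun s hs => (Real.continuousAt_log (hpos s hs).ne').continuousWithinAt) hz.isSelfAdjoint,
    ← forall₂_and]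
  refine forall₂_congr fun s hs => ?_
  rw [Real.norm_eq_abs, abs_le, Real.log_le_iff_le_exp (hpos s hs),
    Real.le_log_iff_exp_le (hpos s hs), and_comm]

lemma dd_nonneg (x y : A) : 0 ≤ dd x y := norm_nonneg _

lemma dd_geo_le {a b c e : A} (ha : IsStrictlyPositive a) (hb : IsStrictlyPositive b)
    (hc : IsStrictlyPositive c) (he : IsStrictlyPositive e) {t : ℝ}
    (ht : t ∈ Set.Icc (0 : ℝ) 1) :
    dd (geo a b t) (geo c e t) ≤ (1 - t) * dd a c + t * dd b e := by
  have h1 := (dd_le_iff ha hc (dd_nonneg a c)).1 le_rfl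
  have h2 := (dd_le_iff hb he (dd_nonneg b e)).1 le_rfl
  rw [dd_le_iff (geo_sp ha hb t) (geo_sp hc he t)
    (add_nonneg (mul_nonneg (by linarith [ht.2]) (dd_nonneg a c))
      (mul_nonneg ht.1 (dd_nonneg b e)))]
  exact ⟨geo_mono ha hb hc he ht h1.1 h2.1, geo_mono hc he ha hb ht h1.2 h2.2⟩

end

lemma dd_geo_le' {A : Type*} [CStarAlgebra A] {a b c e : A} (ha : IsPosInv a) (hb : IsPosInv b)
    (hc : IsPosInv c) (he : IsPosInv e) {t : ℝ} (ht : t ∈ Set.Icc (0 : ℝ) 1) :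
    dd (geo a b t) (geo c e t) ≤ (1 - t) * dd a c + t * dd b e := by
  let _ := CStarAlgebra.spectralOrder A
  have _ := CStarAlgebra.spectralOrderedRing A
  exact dd_geo_le (isPosInv_iff.1 ha) (isPosInv_iff.1 hb) (isPosInv_iff.1 hc)
    (isPosInv_iff.1 he) ht

lemma exists_near {A : Type*} [CStarAlgebra A] {C : Set A} (hne : C.Nonempty) (a : A) {ε : ℝ}
    (hε : 0 < ε) : ∃ c ∈ C, dd a c < distSet a C + ε := by
  obtain ⟨c0, hc0⟩ := hne
  obtain ⟨_, ⟨c, hc, rfl⟩, h⟩ := exists_lt_of_csInf_lt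
    (s := {r : ℝ | ∃ c ∈ C, r = dd a c}) ⟨_, c0, hc0, rfl⟩ (lt_add_of_pos_right _ hε)
  exact ⟨c, hc, h⟩

lemma distSet_le {A : Type*} [CStarAlgebra A] {C : Set A} (a : A) {c : A} (hc : c ∈ C) :
    distSet a C ≤ dd a c := by
  refine csInf_le ⟨0, ?_⟩ ⟨c, hc, rfl⟩
  rintro _ ⟨c, _, rfl⟩
  exact norm_nonneg _

end Stmt11Aux

/-- The distance to a nonempty geodesically convex subset of the positive invertible
cone is a geodesically convex function. -/
theorem stmt11 {A : Type*} [CStarAlgebra A] (C : Set A) (hne : C.Nonempty)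
    (hCP : ∀ c ∈ C, IsPosInv c)
    (hconv : ∀ x ∈ C, ∀ y ∈ C, ∀ t ∈ Set.Icc (0 : ℝ) 1, geo x y t ∈ C)
    (a b : A) (ha : IsPosInv a) (hb : IsPosInv b)
    (t : ℝ) (ht : t ∈ Set.Icc (0 : ℝ) 1) :
    distSet (geo a b t) C ≤ (1 - t) * distSet a C + t * distSet b C := by
  refine le_of_forall_pos_le_add fun ε hε => ?_
  obtain ⟨c, hc, h1⟩ := Stmt11Aux.exists_near hne a hε
  obtain ⟨e, he, h2⟩ := Stmt11Aux.exists_near hne b hε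
  have h3 := Stmt11Aux.distSet_le (geo a b t) (hconv c hc e he t ht)
  have h4 := Stmt11Aux.dd_geo_le' ha hb (hCP c hc) (hCP e he) ht
  have h5 := mul_le_mul_of_nonneg_left h1.le (sub_nonneg.2 ht.2)
  have h6 := mul_le_mul_of_nonneg_left h2.le ht.1
  nlinarith
end

section
/- Let A be a unital complex C*-algebra, H a unitarizable subgroup of Aˣ, and r, s positive invertible elements of A. For t ∈ [0,1] let γ_t = γ_{r²,s²}(t) = r(r⁻¹ s² r⁻¹)^t r and let H_t = γ_t^{-1/2} H γ_t^{1/2}. Then Sim(H_t) ≤ Sim(r⁻¹ H r)^{1−t} · Sim(s⁻¹ H s)^{t}, where Sim(K) = inf{‖u‖‖u⁻¹‖ : u ∈ Aˣ, u⁻¹ K u consists of unitaries}. -/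
section Helpers

variable {A : Type*} [CStarAlgebra A] [PartialOrder A] [StarOrderedRing A]

noncomputable def gm13 (g : Aˣ) (b : A) (t : ℝ) : A :=
  (g : A) * ((↑g⁻¹ : A) * b * star (↑g⁻¹ : A)) ^ t * star (g : A)

lemma units_star_inv13 (g : Aˣ) : star (↑g⁻¹ : A) = (↑(star g)⁻¹ : A) := by
  rw [← star_inv]; rfl

lemma sp13 (k : Aˣ) : IsStrictlyPositive ((k : A) * star (k : A)) :=
  IsUnit.isStrictlyPositive (k * star k).isUnit (mul_star_self_nonneg _)

lemma unitary_conj_rpow13 (U : unitary A) (x : A) (hx : 0 ≤ x) (hu : IsUnit x) (t : ℝ) :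
    (U : A) * x ^ t * star (U : A) = ((U : A) * x * star (U : A)) ^ t := by
  have h0 : (0:ℝ) ∉ spectrum ℝ x := spectrum.zero_notMem _ hu
  have hx' : 0 ≤ (U : A) * x * star (U : A) := star_right_conjugate_nonneg hx _
  rw [CFC.rpow_eq_cfc_real hx, CFC.rpow_eq_cfc_real hx']
  have := StarAlgHomClass.map_cfc (R := ℝ) (S := ℝ) (Unitary.conjStarAlgAut ℝ A U)
    (fun y : ℝ => y ^ t) x
    (by
      refine ContinuousOn.rpow_const continuousOn_id ?_
      intro y hy; left; rintro rfl; exact h0 hy)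
    (by
      change Continuous (fun y : A => (U : A) * y * star (U : A))
      fun_prop) (IsSelfAdjoint.of_nonneg hx) (IsSelfAdjoint.of_nonneg hx')
  simpa [Unitary.conjStarAlgAut_apply] using this

lemma gm13_congr (g g' k : Aˣ) (t : ℝ)
    (h : (g : A) * star (g : A) = (g' : A) * star (g' : A)) :
    gm13 g ((k : A) * star (k : A)) t = gm13 g' ((k : A) * star (k : A)) t := by
  have hU : g * star g = g' * star g' := Units.ext h
  let W : Aˣ := g'⁻¹ * g
  have hW : W * star W = 1 := by
    simp only [W, star_mul, star_inv]
    rw [show g'⁻¹ * g * (star g * (star g')⁻¹) = g'⁻¹ * (g * star g) * (star g')⁻¹ by group, hU]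
    group
  have hW' : star W * W = 1 := by
    exact mul_eq_one_comm.1 hW
  let U : unitary A := ⟨(W : A), by
    rw [Unitary.mem_iff]
    exact ⟨congrArg Units.val hW', congrArg Units.val hW⟩⟩
  have key := unitary_conj_rpow13 U ((↑g⁻¹ : A) * ((k : A) * star (k : A)) * star (↑g⁻¹ : A))
    (star_right_conjugate_nonneg (mul_star_self_nonneg _) _)
    (by
      rw [units_star_inv13]
      exact (g⁻¹ * (k * star k) * (star g)⁻¹).isUnit) t
  have e1 : (U : A) * ((↑g⁻¹ : A) * ((k : A) * star (k : A)) * star (↑g⁻¹ : A)) * star (U : A)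
      = (↑g'⁻¹ : A) * ((k : A) * star (k : A)) * star (↑g'⁻¹ : A) := by
    have : W * (g⁻¹ * (k * star k) * star (g⁻¹)) * star W
        = g'⁻¹ * (k * star k) * star (g'⁻¹) := by
      simp only [W, star_mul, star_inv]; group
    exact congrArg Units.val this
  rw [e1] at key
  unfold gm13
  rw [← key]
  have e2 : (g : A) = (g' : A) * (U : A) := by
    have : g = g' * W := by simp [W]
    exact congrArg Units.val this
  rw [e2, star_mul]
  simp only [mul_assoc]

lemma gm13_conj (h g : Aˣ) (b : A) (t : ℝ) :
    (h : A) * gm13 g b t * star (h : A) = gm13 (h * g) ((h : A) * b * star (h : A)) t := by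
  unfold gm13
  have : (↑(h * g)⁻¹ : A) * ((h : A) * b * star (h : A)) * star (↑(h * g)⁻¹ : A)
      = (↑g⁻¹ : A) * b * star (↑g⁻¹ : A) := by
    have e : (↑(h * g)⁻¹ : A) * (h : A) = (↑g⁻¹ : A) := by
      rw [← Units.val_mul]; congr 1; group
    calc _ = ((↑(h * g)⁻¹ : A) * (h : A)) * b * star ((↑(h * g)⁻¹ : A) * (h : A)) := by
            rw [star_mul]; simp only [mul_assoc]
      _ = _ := by rw [e]
  rw [this]
  simp only [Units.val_mul, star_mul, mul_assoc]

lemma gm13_mono (g : Aˣ) {b b' : A} (h : b ≤ b') {t : ℝ} (ht : t ∈ Set.Icc (0 : ℝ) 1) :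
    gm13 g b t ≤ gm13 g b' t := by
  unfold gm13
  exact star_right_conjugate_le_conjugate
    (CFC.rpow_le_rpow ht (star_right_conjugate_le_conjugate h _)) _

lemma smul_rpow13 {c : ℝ} (hc : 0 ≤ c) {x : A} (hx : 0 ≤ x) {t : ℝ} (ht : 0 ≤ t) :
    (c • x) ^ t = (c ^ t) • x ^ t := by
  have hcx : 0 ≤ c • x := smul_nonneg hc hx
  have hsa : IsSelfAdjoint x := IsSelfAdjoint.of_nonneg hx
  have hcont : Continuous (fun y : ℝ => y ^ t) := Real.continuous_rpow_const ht
  rw [CFC.rpow_eq_cfc_real hcx, CFC.rpow_eq_cfc_real hx, ← cfc_comp_smul c _ x,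
    ← cfc_smul _ _ _]
  refine cfc_congr ?_
  intro y hy
  have hy0 : 0 ≤ y := spectrum_nonneg_of_nonneg hx hy
  simp [Real.mul_rpow hc hy0]

lemma gm13_smul (g : Aˣ) {c : ℝ} (hc : 0 ≤ c) {b : A} (hb : 0 ≤ b) {t : ℝ} (ht : 0 ≤ t) :
    gm13 g (c • b) t = (c ^ t) • gm13 g b t := by
  unfold gm13
  rw [mul_smul_comm, smul_mul_assoc, smul_rpow13 hc (star_right_conjugate_nonneg hb _) ht,
    mul_smul_comm, smul_mul_assoc]

lemma gm13_symm (g k : Aˣ) (t : ℝ) :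
    gm13 g ((k : A) * star (k : A)) t = gm13 k ((g : A) * star (g : A)) (1 - t) := by
  set y : A := (↑g⁻¹ : A) * ((k : A) * star (k : A)) * star (↑g⁻¹ : A) with hy
  have hyp : IsStrictlyPositive y := by
    have := sp13 (g⁻¹ * k)
    rw [Units.val_mul, star_mul] at this
    rw [hy]; simpa only [mul_assoc] using this
  let z : Aˣ := ⟨y ^ (1/2 : ℝ), y ^ (-(1/2) : ℝ), CFC.rpow_mul_rpow_neg _ hyp,
    CFC.rpow_neg_mul_rpow _ hyp⟩
  have hz : star (z : A) = z := (IsSelfAdjoint.of_nonneg (CFC.rpow_nonneg (a := y))).star_eq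
  have hzi : star (↑z⁻¹ : A) = (↑z⁻¹ : A) :=
    (IsSelfAdjoint.of_nonneg (CFC.rpow_nonneg (a := y))).star_eq
  have hzz : (z : A) * z = y := by
    change y ^ (1/2 : ℝ) * y ^ (1/2 : ℝ) = y
    rw [← CFC.rpow_add hyp.isUnit]; norm_num; exact CFC.rpow_one y hyp.nonneg
  have hk : (↑(g * z) : A) * star (↑(g * z) : A) = (k : A) * star (k : A) := by
    rw [Units.val_mul, star_mul, hz]
    calc _ = (g : A) * ((z : A) * z) * star (g : A) := by simp only [mul_assoc]
      _ = _ := by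
        rw [hzz, hy]
        have : g * (g⁻¹ * (k * star k) * star (g⁻¹)) * star g = k * star k := by
          simp only [star_inv]; group
        exact congrArg Units.val this
  rw [← gm13_congr (g * z) k g (1 - t) hk]
  have e : (↑(g * z)⁻¹ : A) * ((g : A) * star (g : A)) * star (↑(g * z)⁻¹ : A)
      = y ^ (-1 : ℝ) := by
    have e1 : (↑(g * z)⁻¹ : A) * (g : A) = (↑z⁻¹ : A) := by
      rw [← Units.val_mul]; congr 1; group
    calc _ = ((↑(g * z)⁻¹ : A) * (g : A)) * star ((↑(g * z)⁻¹ : A) * (g : A)) := by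
            rw [star_mul]; simp only [mul_assoc]
      _ = _ := by
        rw [e1, hzi]
        change y ^ (-(1/2) : ℝ) * y ^ (-(1/2) : ℝ) = _
        rw [← CFC.rpow_add hyp.isUnit]; norm_num
  unfold gm13
  rw [e, CFC.rpow_rpow y _ _ (by norm_num) hyp, ← hy, Units.val_mul, star_mul, hz]
  have e3 : (z : A) * y ^ (-1 * (1 - t)) * z = y ^ t := by
    change y ^ (1/2 : ℝ) * _ * y ^ (1/2 : ℝ) = y ^ t
    rw [← CFC.rpow_add hyp.isUnit, ← CFC.rpow_add hyp.isUnit]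
    congr 1; ring
  rw [← e3]
  simp only [mul_assoc]

/-- Joint monotonicity with scalars. -/
lemma gm13_le (g k g' k' : Aˣ) {c d : ℝ} (hc : 0 ≤ c) (hd : 0 ≤ d)
    (h1 : (g : A) * star (g : A) ≤ c • ((g' : A) * star (g' : A)))
    (h2 : (k : A) * star (k : A) ≤ d • ((k' : A) * star (k' : A)))
    {t : ℝ} (ht : t ∈ Set.Icc (0 : ℝ) 1) :
    gm13 g ((k : A) * star (k : A)) t
      ≤ (c ^ (1 - t) * d ^ t) • gm13 g' ((k' : A) * star (k' : A)) t := by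
  have ht' : 1 - t ∈ Set.Icc (0 : ℝ) 1 := ⟨by linarith [ht.2], by linarith [ht.1]⟩
  calc _ ≤ gm13 g (d • ((k' : A) * star (k' : A))) t := gm13_mono g h2 ht
    _ = d ^ t • gm13 g ((k' : A) * star (k' : A)) t :=
      gm13_smul g hd (mul_star_self_nonneg _) ht.1
    _ = d ^ t • gm13 k' ((g : A) * star (g : A)) (1 - t) := by rw [gm13_symm]
    _ ≤ d ^ t • gm13 k' (c • ((g' : A) * star (g' : A))) (1 - t) :=
      smul_le_smul_of_nonneg_left (gm13_mono k' h1 ht') (Real.rpow_nonneg hd _)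
    _ = d ^ t • c ^ (1 - t) • gm13 k' ((g' : A) * star (g' : A)) (1 - t) := by
      rw [gm13_smul k' hc (mul_star_self_nonneg _) ht'.1]
    _ = _ := by rw [← gm13_symm, smul_smul, mul_comm]

lemma gm13_sp (g k : Aˣ) (t : ℝ) :
    ∃ v : Aˣ, gm13 g ((k : A) * star (k : A)) t = (v : A) * star (v : A) := by
  set y : A := (↑g⁻¹ : A) * ((k : A) * star (k : A)) * star (↑g⁻¹ : A) with hy
  have hyp : IsStrictlyPositive y := by
    have := sp13 (g⁻¹ * k)
    rw [Units.val_mul, star_mul] at this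
    rw [hy]; simpa only [mul_assoc] using this
  let z : Aˣ := ⟨y ^ (t/2 : ℝ), y ^ (-(t/2) : ℝ), CFC.rpow_mul_rpow_neg _ hyp,
    CFC.rpow_neg_mul_rpow _ hyp⟩
  have hz : star (z : A) = z := (IsSelfAdjoint.of_nonneg (CFC.rpow_nonneg (a := y))).star_eq
  have hzz : (z : A) * z = y ^ t := by
    change y ^ (t/2 : ℝ) * y ^ (t/2 : ℝ) = y ^ t
    rw [← CFC.rpow_add hyp.isUnit]; congr 1; ring
  refine ⟨g * z, ?_⟩
  rw [Units.val_mul, star_mul, hz]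
  unfold gm13
  rw [← hy, ← hzz]
  simp only [mul_assoc]

lemma mul_unit_le13 (r u : Aˣ) :
    (↑(r * u) : A) * star (↑(r * u) : A) ≤ (‖(u : A)‖ ^ 2) • ((r : A) * star (r : A)) := by
  have h := star_right_conjugate_le_conjugate
    (CStarAlgebra.mul_star_le_algebraMap_norm_sq (a := (u : A))) (r : A)
  rw [Algebra.algebraMap_eq_smul_one, mul_smul_comm, smul_mul_assoc, mul_one] at h
  simpa only [Units.val_mul, star_mul, mul_assoc] using h

lemma norm_le13 (U : Aˣ) {K : ℝ} (hK : 0 ≤ K) (h : (U : A) * star (U : A) ≤ K • 1) :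
    ‖(U : A)‖ ^ 2 ≤ K := by
  rw [← Algebra.algebraMap_eq_smul_one] at h
  have := (CStarAlgebra.norm_le_iff_le_algebraMap _ hK (mul_star_self_nonneg _)).2 h
  rwa [CStarRing.norm_self_mul_star, ← sq] at this

/-- Unitarizers come from fixed points. -/
lemma unitary_iff13 (v h : Aˣ) :
    (↑v⁻¹ : A) * (h : A) * (v : A) ∈ unitary A ↔
      (h : A) * ((v : A) * star (v : A)) * star (h : A) = (v : A) * star (v : A) := by
  have e : (↑v⁻¹ : A) * (h : A) * (v : A) = (↑(v⁻¹ * h * v) : A) := by simp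
  set W : Aˣ := v⁻¹ * h * v with hW
  have hiff : (W : A) ∈ unitary A ↔ W * star W = 1 := by
    rw [Unitary.mem_iff]
    constructor
    · intro hh; exact Units.ext hh.2
    · intro hh
      refine ⟨?_, congrArg Units.val hh⟩
      have : star W * W = 1 := by
        exact mul_eq_one_comm.1 hh
      exact congrArg Units.val this
  rw [e, hiff]
  have : (h : A) * ((v : A) * star (v : A)) * star (h : A) = (v : A) * star (v : A)
      ↔ h * (v * star v) * star h = v * star v :=
    ⟨fun hh => Units.ext hh, fun hh => congrArg Units.val hh⟩
  rw [this]
  have e2 : W * star W = v⁻¹ * (h * (v * star v) * star h) * (star v)⁻¹ := by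
    simp only [hW, star_mul, star_inv]; group
  rw [e2, mul_inv_eq_one, inv_mul_eq_iff_eq_mul]

lemma key13 (H : Subgroup Aˣ) (r s u w : Aˣ) (hr : IsSelfAdjoint (r : A))
    (hs : IsSelfAdjoint (s : A)) (t : ℝ) (ht : t ∈ Set.Icc (0 : ℝ) 1)
    (hu : ∀ h ∈ H, (↑u⁻¹ : A) * ((↑r⁻¹ : A) * (h : A) * (r : A)) * (u : A) ∈ unitary A)
    (hw : ∀ h ∈ H, (↑w⁻¹ : A) * ((↑s⁻¹ : A) * (h : A) * (s : A)) * (w : A) ∈ unitary A) :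
    simConj H (cpow (gammaRS r s t) (-(1/2))) (cpow (gammaRS r s t) (1/2)) ≤
      (‖(u : A)‖ * ‖(↑u⁻¹ : A)‖) ^ (1 - t) * (‖(w : A)‖ * ‖(↑w⁻¹ : A)‖) ^ t := by
  have hγ : gammaRS r s t = gm13 r ((s : A) * star (s : A)) t := by
    have hri : star (↑r⁻¹ : A) = (↑r⁻¹ : A) := by
      rw [units_star_inv13, show star r = r from Units.ext hr.star_eq]
    unfold gammaRS gm13 cpow
    rw [hri, hr.star_eq, hs.star_eq, CFC.rpow_eq_cfc_real]
  obtain ⟨q0, hq0⟩ := gm13_sp r s t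
  set γ := gammaRS r s t with hγdef
  have hγp : IsStrictlyPositive γ := by rw [hγ, hq0]; exact sp13 _
  have ec (x : ℝ) : cpow γ x = γ ^ x := (CFC.rpow_eq_cfc_real hγp.nonneg).symm
  rw [ec, ec]
  let q : Aˣ := ⟨γ ^ (1/2 : ℝ), γ ^ (-(1/2) : ℝ), CFC.rpow_mul_rpow_neg _ hγp,
    CFC.rpow_neg_mul_rpow _ hγp⟩
  have hq : star (q : A) = q := (IsSelfAdjoint.of_nonneg (CFC.rpow_nonneg (a := γ))).star_eq
  have hqi : star (↑q⁻¹ : A) = (↑q⁻¹ : A) :=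
    (IsSelfAdjoint.of_nonneg (CFC.rpow_nonneg (a := γ))).star_eq
  have hqq : (q : A) * star (q : A) = γ := by
    rw [hq]
    change γ ^ (1/2 : ℝ) * γ ^ (1/2 : ℝ) = γ
    rw [← CFC.rpow_add hγp.isUnit]; norm_num; exact CFC.rpow_one γ hγp.nonneg
  change simConj H (↑q⁻¹ : A) (q : A) ≤ _
  obtain ⟨v, hv⟩ := gm13_sp (r * u) (s * w) t
  -- the fixed point property
  have conv (r u h : Aˣ) (hh : (↑u⁻¹ : A) * ((↑r⁻¹ : A) * (h : A) * (r : A)) * (u : A) ∈ unitary A) :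
      (h : A) * ((↑(r * u) : A) * star (↑(r * u) : A)) * star (h : A)
        = (↑(r * u) : A) * star (↑(r * u) : A) := by
    rw [← unitary_iff13]
    simpa [mul_inv_rev, mul_assoc] using hh
  have hfix : ∀ h ∈ H, (h : A) * ((v : A) * star (v : A)) * star (h : A)
      = (v : A) * star (v : A) := by
    intro h hh
    rw [← hv, gm13_conj, conv s w h (hw h hh)]
    apply gm13_congr
    rw [← conv r u h (hu h hh), Units.val_mul h, star_mul]
    simp only [mul_assoc]
  set U : Aˣ := q⁻¹ * v with hU
  have hmem : ‖(U : A)‖ * ‖(↑U⁻¹ : A)‖ ∈ {c : ℝ | ∃ u : Aˣ,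
      (∀ h ∈ H, (↑u⁻¹ : A) * ((↑q⁻¹ : A) * (h : A) * (q : A)) * (u : A) ∈ unitary A) ∧
      c = ‖(u : A)‖ * ‖(↑u⁻¹ : A)‖} := by
    refine ⟨U, ?_, rfl⟩
    intro h hh
    have h1 := (unitary_iff13 v h).2 (hfix h hh)
    have : U⁻¹ * (q⁻¹ * h * q) * U = v⁻¹ * h * v := by rw [hU]; group
    have e := congrArg Units.val this
    simp only [Units.val_mul] at e
    rw [e]; exact h1
  refine (csInf_le ⟨0, ?_⟩ hmem).trans ?_
  · rintro c ⟨u, -, rfl⟩; positivity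
  -- norm bounds
  have b1 := gm13_le (r * u) (s * w) r s (sq_nonneg ‖(u : A)‖) (sq_nonneg ‖(w : A)‖)
    (mul_unit_le13 r u) (mul_unit_le13 s w) ht
  have b2 := gm13_le r s (r * u) (s * w) (sq_nonneg ‖(↑u⁻¹ : A)‖) (sq_nonneg ‖(↑w⁻¹ : A)‖)
    (by simpa using mul_unit_le13 (r * u) u⁻¹) (by simpa using mul_unit_le13 (s * w) w⁻¹) ht
  rw [hv, ← hγ, ← hqq] at b1 b2
  set K := (‖(u : A)‖ ^ 2) ^ (1 - t) * (‖(w : A)‖ ^ 2) ^ t with hK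
  set K' := (‖(↑u⁻¹ : A)‖ ^ 2) ^ (1 - t) * (‖(↑w⁻¹ : A)‖ ^ 2) ^ t with hK'
  have aux (x y : Aˣ) (k : ℝ) (hk : 0 ≤ k)
      (hle : (x : A) * star (x : A) ≤ k • ((y : A) * star (y : A))) :
      ‖(↑(y⁻¹ * x) : A)‖ ^ 2 ≤ k := by
    apply norm_le13 _ hk
    have h := star_right_conjugate_le_conjugate hle (↑y⁻¹ : A)
    have e : (↑y⁻¹ : A) * ((y : A) * star (y : A)) * star (↑y⁻¹ : A) = 1 := by
      have : y⁻¹ * (y * star y) * star (y⁻¹) = 1 := by rw [star_inv]; group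
      exact congrArg Units.val this
    rw [mul_smul_comm, smul_mul_assoc, e] at h
    simpa only [Units.val_mul, star_mul, mul_assoc] using h
  have c1 := aux v q K (by positivity) b1
  have c2 := aux q v K' (by positivity) b2
  have hUi : U⁻¹ = v⁻¹ * q := by rw [hU]; group
  rw [hUi]
  have sqrpow (a x : ℝ) (ha : 0 ≤ a) : (a ^ 2) ^ x = (a ^ x) ^ 2 := by
    rw [← Real.rpow_natCast, ← Real.rpow_mul ha, mul_comm, Real.rpow_mul ha, Real.rpow_natCast]
  have hR : ((‖(u : A)‖ * ‖(↑u⁻¹ : A)‖) ^ (1 - t) * (‖(w : A)‖ * ‖(↑w⁻¹ : A)‖) ^ t) ^ 2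
      = K * K' := by
    rw [hK, hK', sqrpow _ _ (norm_nonneg _), sqrpow _ _ (norm_nonneg _),
      sqrpow _ _ (norm_nonneg _), sqrpow _ _ (norm_nonneg _),
      Real.mul_rpow (norm_nonneg _) (norm_nonneg _),
      Real.mul_rpow (norm_nonneg _) (norm_nonneg _)]
    ring
  refine (pow_le_pow_iff_left₀ (by positivity) (by positivity) two_ne_zero).1 ?_
  rw [hR, mul_pow]
  exact mul_le_mul c1 c2 (by positivity) (by positivity)

end Helpers

lemma simConj_nonempty13 {A : Type*} [CStarAlgebra A] (H : Subgroup Aˣ)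
    (hH : ∃ u : Aˣ, ∀ h ∈ H, (↑u⁻¹ : A) * (h : A) * (u : A) ∈ unitary A) (r : Aˣ) :
    {c : ℝ | ∃ u : Aˣ,
      (∀ h ∈ H, (↑u⁻¹ : A) * ((↑r⁻¹ : A) * (h : A) * (r : A)) * (u : A) ∈ unitary A) ∧
      c = ‖(u : A)‖ * ‖(↑u⁻¹ : A)‖}.Nonempty := by
  obtain ⟨u, hu⟩ := hH
  refine ⟨_, r⁻¹ * u, ?_, rfl⟩
  intro h hh
  have : (r⁻¹ * u)⁻¹ * (r⁻¹ * h * r) * (r⁻¹ * u) = u⁻¹ * h * u := by group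
  have e := congrArg Units.val this
  simp only [Units.val_mul] at e
  have h1 := hu h hh
  rw [← e] at h1
  simpa only [Units.val_mul] using h1

/-- Geometric interpolation for the similarity number:
`Sim(H_t) ≤ Sim(r⁻¹ H r)^{1-t} Sim(s⁻¹ H s)^t`, where
`H_t = γ_t^{-1/2} H γ_t^{1/2}` along the geodesic `γ_t = γ_{r², s²}(t)`. -/
theorem stmt13 {A : Type*} [CStarAlgebra A] (H : Subgroup Aˣ)
    (hH : ∃ u : Aˣ, ∀ h ∈ H, (↑u⁻¹ : A) * (h : A) * (u : A) ∈ unitary A)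
    (r s : Aˣ) (hr : IsPosInv (r : A)) (hs : IsPosInv (s : A))
    (t : ℝ) (ht : t ∈ Set.Icc (0 : ℝ) 1) :
    simConj H (cpow (gammaRS r s t) (-(1/2))) (cpow (gammaRS r s t) (1/2)) ≤
      simConj H (↑r⁻¹ : A) (r : A) ^ (1 - t) * simConj H (↑s⁻¹ : A) (s : A) ^ t := by
  letI : PartialOrder A := CStarAlgebra.spectralOrder A
  haveI : StarOrderedRing A := CStarAlgebra.spectralOrderedRing A
  have bdd (r : Aˣ) : BddBelow {c : ℝ | ∃ u : Aˣ,
      (∀ h ∈ H, (↑u⁻¹ : A) * ((↑r⁻¹ : A) * (h : A) * (r : A)) * (u : A) ∈ unitary A) ∧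
      c = ‖(u : A)‖ * ‖(↑u⁻¹ : A)‖} := by
    refine ⟨0, ?_⟩
    rintro c ⟨u, -, rfl⟩
    positivity
  obtain ⟨x, -, hx, hxm⟩ := exists_seq_tendsto_sInf (simConj_nonempty13 H hH r) (bdd r)
  obtain ⟨y, -, hy, hym⟩ := exists_seq_tendsto_sInf (simConj_nonempty13 H hH s) (bdd s)
  have hx' := hx.rpow_const (p := 1 - t) (Or.inr (by linarith [ht.2]))
  have hy' := hy.rpow_const (p := t) (Or.inr ht.1)
  refine ge_of_tendsto' (hx'.mul hy') ?_
  intro n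
  obtain ⟨u, hu, hue⟩ := hxm n
  obtain ⟨w, hw, hwe⟩ := hym n
  rw [hue, hwe]
  exact key13 H r s u w hr.1 hs.1 t ht hu hw
end
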